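/- arXiv:2308.16728 — 2 statements merged into one kernel-verified Lean document; each statement's English description precedes it below -/
import Mathlib

section
/- For every integer d ≥ 12 and every real ε > 0 there exists r₀ such that for all integers r ≥ r₀ one has ( d^{−1/3} − ε ) · r^{1/3} ≤ f(r, K_{2,d+1}) ≤ ( 2·d^{−1/3}·(1 − 1.5·d^{−1/2})^{−5/3} + ε ) · r^{1/3}, where K_{2,d+1} denotes the complete bipartite graph with parts of sizes 2 and d+1. -/
open SimpleGraph

/-- `G` is an `(r,k)`-graph: its vertex set can be partitioned into `r` parts,
each of size at most `k`, with at least one edge between any two distinct parts. -/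
def IsRKGraph {V : Type} [Fintype V] (G : SimpleGraph V) (r k : ℕ) : Prop :=
  ∃ P : Fin r → Finset V,
    (∀ v : V, ∃! i, v ∈ P i) ∧
    (∀ i, (P i).card ≤ k) ∧
    ∀ i j : Fin r, i ≠ j → ∃ u ∈ P i, ∃ w ∈ P j, G.Adj u w

/-- `G` contains a subgraph isomorphic to `H`. -/
def ContainsSub {W V : Type} (H : SimpleGraph W) (G : SimpleGraph V) : Prop :=
  ∃ f : H →g G, Function.Injective f

/-- `f(r,H)`: the minimum `k` for which there exists an `H`-free `(r,k)`-graph. -/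
noncomputable def fGraph {W : Type} (H : SimpleGraph W) (r : ℕ) : ℕ :=
  sInf {k | ∃ (n : ℕ) (G : SimpleGraph (Fin n)), ¬ ContainsSub H G ∧ IsRKGraph G r k}

/-! Lower bound: an `(r, k)`-graph has at most `r k` vertices and at least `r (r - 1) / 2` edges,
while Kővári–Sós–Turán double counting bounds the number of edges when any two vertices have at
most `d` common neighbours.

Upper bound: let `F` have `q²` elements and let `χ : Fˣ → A × B` be surjective with kernel of order
at most `d`. Joining `(x, g)` to `(y, h)` when `χ (x + y) = g h` gives a bipartite graph on two
copies of `F × A × B` in which any two vertices have at most `d` common neighbours; the parts are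
the unions of a translate of `A` on one side and of `B` on the other, so `k = |A| + |B|`. Taking
`|A| = (q - 1) / e` and `|B| = (q + 1) / o` with `{e, o} = {m, m + 1}` and `m (m + 1) ≤ d` confines
`q` to a residue class, so what is needed is a prime power in that class in every interval
`[X, (1 + c) X]`, `X` large. It comes from a Wiener–Ikehara argument: testing the Dirichlet series
of `Λ` on the class against a minorant of an interval with compactly supported Fourier transform
(Selberg's) reduces the claim to the continuity of `L - A / (s - 1)` on the line `re s = 1` and the
Riemann–Lebesgue lemma. -/

section FourierLSeries

open Complex Filter FourierTransform MeasureTheory Set Topology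

theorem lseries_term_add_two_pi_mul_I (f : ℕ → ℂ) (s : ℂ) (t : ℝ) (n : ℕ) :
    LSeries.term f (s + (2 * Real.pi * t : ℝ) * I) n =
      LSeries.term f s n * Real.fourierChar (-(t * Real.log n)) := by
  rcases eq_or_ne n 0 with rfl | hn
  · simp
  have hn' : (n : ℂ) ≠ 0 := mod_cast hn
  rw [LSeries.term_of_ne_zero hn, LSeries.term_of_ne_zero hn, cpow_add _ _ hn',
    Real.fourierChar_apply, cpow_def_of_ne_zero hn' ((2 * Real.pi * t : ℝ) * I), ← natCast_log,
    ← div_div, div_eq_mul_inv _ (cexp _), ← exp_neg]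
  congr 2
  push_cast
  ring

theorem hasSum_term_mul_fourier_log {f : ℕ → ℂ} {s : ℂ} (hf : LSeriesSummable f s) {ψ : ℝ → ℂ}
    (hψ : Integrable ψ) :
    HasSum (fun n : ℕ ↦ LSeries.term f s n * 𝓕 ψ (Real.log n))
      (∫ t : ℝ, ψ t * LSeries f (s + (2 * Real.pi * t : ℝ) * I)) := by
  set F : ℕ → ℝ → ℂ := fun n t ↦
    LSeries.term f s n * (Real.fourierChar (-(t * Real.log n)) • ψ t) with hF
  have norm_F (n : ℕ) (t : ℝ) : ‖F n t‖ = ‖LSeries.term f s n‖ * ‖ψ t‖ := by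
    rw [norm_mul, Circle.norm_smul]
  have integrable_F (n : ℕ) : Integrable (F n) := by
    refine Integrable.const_mul ?_ _
    simpa [mul_comm] using (Real.fourierIntegral_convergent_iff (f := ψ) (Real.log n)).2 hψ
  have summable_F : Summable fun n ↦ ∫ t, ‖F n t‖ := by
    simp_rw [norm_F, integral_const_mul]
    exact hf.norm.mul_right _
  have integral_F (n : ℕ) : ∫ t, F n t = LSeries.term f s n * 𝓕 ψ (Real.log n) := by
    rw [integral_const_mul, Real.fourier_real_eq]
  have tsum_F (t : ℝ) : ∑' n, F n t = ψ t * LSeries f (s + (2 * Real.pi * t : ℝ) * I) := by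
    rw [LSeries, ← tsum_mul_left]
    refine tsum_congr fun n ↦ ?_
    simp only [lseries_term_add_two_pi_mul_I, hF, Circle.smul_def, smul_eq_mul]
    ring
  simp_rw [← integral_F, ← tsum_F]
  exact hasSum_integral_of_summable_integral_norm integrable_F summable_F

theorem integral_Ioi_exp_mul_fourier {z : ℂ} (hz : 0 < z.re) {ψ : ℝ → ℂ} (hψ : Integrable ψ) :
    ∫ v in Ioi (0 : ℝ), cexp (-z * v) * 𝓕 ψ v =
      ∫ t : ℝ, ψ t * (1 / (z + (2 * Real.pi * t : ℝ) * I)) := by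
  have laplace (t : ℝ) : ∫ v in Ioi (0 : ℝ), Real.fourierChar (-(v * t)) • cexp (-z * v) =
      1 / (z + (2 * Real.pi * t : ℝ) * I) := by
    have h := integral_exp_mul_complex_Ioi (a := -(z + (2 * Real.pi * t : ℝ) * I))
      (by simpa using hz) 0
    rw [ofReal_zero, mul_zero, exp_zero, neg_div_neg_eq] at h
    rw [← h]
    congr 1 with v
    rw [Circle.smul_def, smul_eq_mul, Real.fourierChar_apply, ← exp_add]
    congr 1
    push_cast
    ring
  have hexp : IntegrableOn (fun v : ℝ ↦ cexp (-z * v)) (Ioi 0) :=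
    integrableOn_exp_mul_complex_Ioi (by simpa using hz) 0
  have flip := VectorFourier.integral_fourierIntegral_smul_eq_flip (L := innerₗ ℝ)
    Real.continuous_fourierChar continuous_inner hψ hexp
  calc
    _ = ∫ v in Ioi (0 : ℝ), 𝓕 ψ v • cexp (-z * v) := by simp_rw [smul_eq_mul, mul_comm]
    _ = ∫ t : ℝ, ψ t • ∫ v in Ioi (0 : ℝ), Real.fourierChar (-(v * t)) • cexp (-z * v) := flip
    _ = _ := by simp_rw [laplace, smul_eq_mul]

theorem fourier_fourierChar_smul (φ : ℝ → ℂ) (L v : ℝ) :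
    𝓕 (fun t ↦ Real.fourierChar (t * L) • φ t) v = 𝓕 φ (v - L) := by
  rw [Real.fourier_real_eq, Real.fourier_real_eq]
  congr 1 with t
  rw [smul_smul, ← AddChar.map_add_eq_mul]
  congr 2
  ring

theorem tendsto_integral_Ioi_exp_neg_mul {g : ℝ → ℂ} (hg : IntegrableOn g (Ioi 0)) :
    Tendsto (fun η : ℝ ↦ ∫ v in Ioi (0 : ℝ), cexp (-η * v) * g v) (𝓝[>] 0)
      (𝓝 (∫ v in Ioi (0 : ℝ), g v)) := by
  refine tendsto_integral_filter_of_dominated_convergence (fun v ↦ ‖g v‖)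
    (.of_forall fun η ↦ (by fun_prop : Continuous _).aestronglyMeasurable.mul
      hg.aestronglyMeasurable) ?_ hg.norm (.of_forall fun v ↦ ?_)
  · filter_upwards [self_mem_nhdsWithin] with η (hη : 0 < η)
    filter_upwards [ae_restrict_mem measurableSet_Ioi] with v (hv : 0 < v)
    rw [norm_mul, norm_exp]
    refine mul_le_of_le_one_left (norm_nonneg _) (Real.exp_le_one_iff.2 ?_)
    simpa using (mul_pos hη hv).le
  · have hcont : Continuous fun η : ℝ ↦ cexp (-η * v) * g v := by fun_prop
    simpa using (hcont.tendsto 0).mono_left nhdsWithin_le_nhds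

theorem tendsto_integral_Ioi_fourier_sub {φ : ℝ → ℂ} (hφ : Continuous φ) (hφi : Integrable φ)
    (hFφ : Integrable (𝓕 φ)) :
    Tendsto (fun L : ℝ ↦ ∫ v in Ioi (0 : ℝ), 𝓕 φ (v - L)) atTop (𝓝 (φ 0)) := by
  have inversion : ∫ v, 𝓕 φ v = φ 0 := by
    rw [← congrFun (hφ.fourierInv_fourier_eq hφi hFφ) 0, Real.fourierInv_eq]
    simp
  have shift (L : ℝ) : ∫ v in Ioi (0 : ℝ), 𝓕 φ (v - L) = ∫ v in Ioi (-L), 𝓕 φ v := by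
    rw [← integral_indicator measurableSet_Ioi, ← integral_indicator measurableSet_Ioi,
      ← integral_sub_right_eq_self ((Ioi (-L)).indicator (𝓕 φ)) L]
    congr 1 with v
    simp [indicator]
  simp_rw [shift, ← inversion]
  exact (aecover_Ioi tendsto_neg_atTop_atBot).integral_tendsto_of_countably_generated hFφ

end FourierLSeries

section Tauberian

open Complex Filter FourierTransform MeasureTheory Set Topology

/-- The hypothesis of the Wiener–Ikehara theorem: the Dirichlet series of `f` converges for
`1 < re s`, and its difference with `A / (s - 1)` extends to a function `G` that is continuous
on the closed half-plane `1 ≤ re s`. -/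
structure HasBoundaryPole (f : ℕ → ℝ) (G : ℂ → ℂ) (A : ℝ) : Prop where
  summable (s : ℂ) : 1 < s.re → LSeriesSummable (fun n ↦ (f n : ℂ)) s
  continuousOn : ContinuousOn G {s | 1 ≤ s.re}
  eq_sub (s : ℂ) : 1 < s.re → G s = LSeries (fun n ↦ (f n : ℂ)) s - A / (s - 1)

variable {f : ℕ → ℝ} {G : ℂ → ℂ} {A : ℝ}

theorem hasSum_term_mul_fourier_log_of_pole (hfG : HasBoundaryPole f G A)
    {ψ : ℝ → ℂ} (hψ : Continuous ψ) (hψc : HasCompactSupport ψ) {η : ℝ} (hη : 0 < η) :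
    HasSum (fun n : ℕ ↦ LSeries.term (fun n ↦ (f n : ℂ)) (1 + η) n * 𝓕 ψ (Real.log n))
      ((∫ t : ℝ, ψ t * G (1 + η + (2 * Real.pi * t : ℝ) * I)) +
        A * ∫ v in Ioi (0 : ℝ), cexp (-η * v) * 𝓕 ψ v) := by
  have hψi : Integrable ψ := hψ.integrable_of_hasCompactSupport hψc
  have hre (t : ℝ) : 1 < (1 + η + (2 * Real.pi * t : ℝ) * I : ℂ).re := by simpa using hη
  have hne (t : ℝ) : (η + (2 * Real.pi * t : ℝ) * I : ℂ) ≠ 0 := fun h ↦ by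
    simpa [hη.ne'] using congrArg re h
  have continuous_G : Continuous fun t : ℝ ↦ G (1 + η + (2 * Real.pi * t : ℝ) * I) :=
    hfG.continuousOn.comp_continuous (by fun_prop) fun t ↦ (hre t).le
  have integrable_G : Integrable fun t : ℝ ↦ ψ t * G (1 + η + (2 * Real.pi * t : ℝ) * I) :=
    (hψ.mul continuous_G).integrable_of_hasCompactSupport hψc.mul_right
  have integrable_pole :
      Integrable fun t : ℝ ↦ ψ t * (1 / (η + (2 * Real.pi * t : ℝ) * I)) :=
    (hψ.mul (continuous_const.div (by fun_prop) hne)).integrable_of_hasCompactSupport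
      hψc.mul_right
  convert hasSum_term_mul_fourier_log (hfG.summable (1 + η) (by simpa using hη)) hψi using 1
  rw [integral_Ioi_exp_mul_fourier (by simpa using hη) hψi, ← integral_const_mul,
    ← integral_add integrable_G (integrable_pole.const_mul _)]
  congr 1 with t
  rw [hfG.eq_sub _ (hre t)]
  ring

theorem tendsto_integral_mul_boundary (hG : ContinuousOn G {s | 1 ≤ s.re}) {ψ : ℝ → ℂ}
    (hψ : Continuous ψ) (hψc : HasCompactSupport ψ) :
    Tendsto (fun η : ℝ ↦ ∫ t : ℝ, ψ t * G (1 + η + (2 * Real.pi * t : ℝ) * I)) (𝓝[>] 0)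
      (𝓝 (∫ t : ℝ, ψ t * G (1 + (2 * Real.pi * t : ℝ) * I))) := by
  have hcont : ContinuousOn
      (fun η : ℝ ↦ ∫ t : ℝ, ψ t * G (1 + η + (2 * Real.pi * t : ℝ) * I)) (Ici 0) := by
    refine continuousOn_integral_of_compact_support hψc (ContinuousOn.mul (by fun_prop) ?_) ?_
    · refine hG.comp (by fun_prop) ?_
      rintro ⟨η, t⟩ ⟨hη, -⟩
      simpa using hη
    · intro η t _ ht
      rw [image_eq_zero_of_notMem_tsupport ht, zero_mul]
  simpa using (hcont 0 self_mem_Ici).tendsto.mono_left (nhdsWithin_mono _ Ioi_subset_Ici_self)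

theorem re_integral_boundary_add_le_zero (hf : ∀ n, 0 ≤ f n) (hfG : HasBoundaryPole f G A)
    {ψ : ℝ → ℂ} (hψ : Continuous ψ) (hψc : HasCompactSupport ψ) (hFψ : Integrable (𝓕 ψ))
    (hneg : ∀ n : ℕ, n ≠ 0 → f n ≠ 0 → (𝓕 ψ (Real.log n)).re ≤ 0) :
    ((∫ t : ℝ, ψ t * G (1 + (2 * Real.pi * t : ℝ) * I)) +
      A * ∫ v in Ioi (0 : ℝ), 𝓕 ψ v).re ≤ 0 := by
  have lim := (tendsto_integral_mul_boundary hfG.continuousOn hψ hψc).add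
    ((tendsto_integral_Ioi_exp_neg_mul hFψ.integrableOn).const_mul (A : ℂ))
  refine le_of_tendsto ((continuous_re.tendsto _).comp lim) ?_
  filter_upwards [self_mem_nhdsWithin] with η (hη : 0 < η)
  have hs := hasSum_term_mul_fourier_log_of_pole hfG hψ hψc hη
  rw [Function.comp_apply, ← hs.tsum_eq, re_tsum hs.summable]
  refine tsum_nonpos fun n ↦ ?_
  obtain ⟨c, hc, hcf⟩ : ∃ c : ℝ, 0 ≤ c ∧
      LSeries.term (fun n ↦ (f n : ℂ)) (1 + η) n = (c * f n : ℝ) := by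
    rcases eq_or_ne n 0 with rfl | hn
    · exact ⟨0, le_rfl, by simp⟩
    refine ⟨((n : ℝ) ^ (1 + η))⁻¹, by positivity, ?_⟩
    rw [LSeries.term_of_ne_zero hn]
    push_cast [ofReal_cpow n.cast_nonneg]
    rw [div_eq_inv_mul]
  rcases eq_or_ne n 0 with rfl | hn
  · simp
  rw [hcf, re_ofReal_mul]
  rcases eq_or_ne (f n) 0 with hfn | hfn
  · simp [hfn]
  · exact mul_nonpos_of_nonneg_of_nonpos (mul_nonneg hc (hf n)) (hneg n hn hfn)

theorem tendsto_integral_fourierChar_smul_mul (φ g : ℝ → ℂ) :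
    Tendsto (fun L : ℝ ↦ ∫ t : ℝ, (Real.fourierChar (t * L) • φ t) * g t) atTop (𝓝 0) := by
  have h := (Real.tendsto_integral_exp_smul_cocompact fun t : ℝ ↦ φ t * g t).comp
    (tendsto_neg_atTop_atBot.mono_right atBot_le_cocompact)
  refine h.congr fun L ↦ ?_
  simp [smul_mul_assoc]

theorem eventually_exists_re_fourier_log_sub_pos (hf : ∀ n, 0 ≤ f n) (hA : 0 < A)
    (hfG : HasBoundaryPole f G A)
    {φ : ℝ → ℂ} (hφ : Continuous φ) (hφc : HasCompactSupport φ) (hFφ : Integrable (𝓕 φ))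
    (hφ₀ : 0 < (φ 0).re) :
    ∀ᶠ L : ℝ in atTop, ∃ n : ℕ, n ≠ 0 ∧ f n ≠ 0 ∧ 0 < (𝓕 φ (Real.log n - L)).re := by
  have lim : Tendsto (fun L : ℝ ↦ (∫ t : ℝ, (Real.fourierChar (t * L) • φ t) *
      G (1 + (2 * Real.pi * t : ℝ) * I)) + A * ∫ v in Ioi (0 : ℝ), 𝓕 φ (v - L)) atTop
      (𝓝 (A * φ 0)) := by
    simpa using (tendsto_integral_fourierChar_smul_mul φ _).add
      ((tendsto_integral_Ioi_fourier_sub hφ (hφ.integrable_of_hasCompactSupport hφc)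
        hFφ).const_mul (A : ℂ))
  have hpos : 0 < (A * φ 0).re := by simpa using mul_pos hA hφ₀
  filter_upwards [((continuous_re.tendsto _).comp lim).eventually_const_lt hpos] with L hL
  by_contra! hneg
  refine hL.not_ge ?_
  rw [Function.comp_apply]
  have hshift := fourier_fourierChar_smul φ L
  have h := re_integral_boundary_add_le_zero hf hfG
    (ψ := fun t ↦ Real.fourierChar (t * L) • φ t) (by fun_prop) (hφc.smul_left)
    (by simpa only [funext hshift] using hFφ.comp_sub_right L) (by simpa only [hshift] using hneg)
  simpa only [hshift] using h

end Tauberian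

section SelbergKernel

open Complex Filter FourierTransform MeasureTheory Set Topology

theorem fourier_comp_mul_right (φ : ℝ → ℂ) {δ : ℝ} (hδ : 0 < δ) (u : ℝ) :
    𝓕 (fun t ↦ φ (t * δ)) u = δ⁻¹ * 𝓕 φ (u / δ) := by
  have h := Measure.integral_comp_mul_right
    (fun t ↦ Real.fourierChar (-(t * (u / δ))) • φ t) δ
  rw [abs_of_pos (inv_pos.2 hδ), real_smul] at h
  rw [Real.fourier_real_eq, Real.fourier_real_eq, ← h]
  congr 1 with t
  congr 3
  field_simp

theorem fourier_ofReal_comp_abs {g : ℝ → ℝ} (hg : Integrable fun t ↦ g |t|) (u : ℝ) :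
    𝓕 (fun t ↦ (g |t| : ℂ)) u =
      (2 * ∫ t in Ioi 0, g t * Real.cos (2 * Real.pi * t * u) : ℝ) := by
  set F : ℝ → ℂ := fun t ↦ Real.fourierChar (-(t * u)) • (g |t| : ℂ) with hF
  have integrable_F : Integrable F := by
    simpa [hF, mul_comm] using
      (Real.fourierIntegral_convergent_iff (f := fun t ↦ (g |t| : ℂ)) u).2 hg.ofReal
  have add_neg (t : ℝ) :
      F t + F (-t) = (2 * (g |t| * Real.cos (2 * Real.pi * |t| * u)) : ℝ) := by
    have hcos : Real.cos (2 * Real.pi * |t| * u) = Real.cos (2 * Real.pi * (t * u)) := by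
      rw [← Real.cos_abs, ← Real.cos_abs (2 * Real.pi * (t * u))]
      simp [abs_mul, mul_assoc]
    rw [hcos]
    simp only [hF, abs_neg, Circle.smul_def, Real.fourierChar_apply, smul_eq_mul, ofReal_mul,
      ofReal_cos, Complex.cos]
    push_cast
    ring_nf
  have hsum : ∫ t, F t + F (-t) = 2 * ∫ t, F t := by
    rw [integral_add integrable_F integrable_F.comp_neg, integral_neg_eq_self F, two_mul]
  have habs := integral_comp_abs (f := fun t ↦ 2 * (g t * Real.cos (2 * Real.pi * t * u)))
  rw [Real.fourier_real_eq]
  simp_rw [add_neg] at hsum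
  rw [integral_complex_ofReal, habs, integral_const_mul] at hsum
  push_cast at hsum ⊢
  linear_combination -hsum / 2

/-- The inverse Fourier transform, restricted to `t ≥ 0`, of Selberg's minorant
`(sin π u / π u) ^ 2 / (1 - u ^ 2)` of the indicator function of `[-1, 1]`. -/
noncomputable def selbergKernel (t : ℝ) : ℝ :=
  1 - min t 1 + Real.sin (2 * Real.pi * min t 1) / (2 * Real.pi)

theorem selbergKernel_eq_zero {t : ℝ} (ht : 1 ≤ t) : selbergKernel t = 0 := by
  simp [selbergKernel, min_eq_right ht]

theorem selbergKernel_zero : selbergKernel 0 = 1 := by simp [selbergKernel]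

theorem continuous_selbergKernel : Continuous selbergKernel := by unfold selbergKernel; fun_prop

theorem hasCompactSupport_selbergKernel_abs : HasCompactSupport fun t ↦ selbergKernel |t| := by
  refine .intro (isCompact_Icc (a := -1) (b := 1)) fun t ht ↦ selbergKernel_eq_zero ?_
  rw [mem_Icc, ← abs_le] at ht
  exact (not_le.1 ht).le

theorem integrable_selbergKernel_abs : Integrable fun t ↦ selbergKernel |t| :=
  (continuous_selbergKernel.comp continuous_abs).integrable_of_hasCompactSupport
    hasCompactSupport_selbergKernel_abs

/-- Selberg's minorant `(sin π u / π u) ^ 2 / (1 - u ^ 2)` of the indicator function of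
`[-1, 1]`, defined as a cosine transform so that its removable singularities need no care. -/
noncomputable def selbergMinorant (u : ℝ) : ℝ :=
  2 * ∫ t in Ioi 0, selbergKernel t * Real.cos (2 * Real.pi * t * u)

theorem fourier_selbergKernel_abs (u : ℝ) :
    𝓕 (fun t ↦ (selbergKernel |t| : ℂ)) u = selbergMinorant u :=
  fourier_ofReal_comp_abs integrable_selbergKernel_abs u

theorem selbergMinorant_eq_intervalIntegral (u : ℝ) :
    selbergMinorant u = 2 * ∫ t in (0 : ℝ)..1,
      (1 - t + Real.sin (2 * Real.pi * t) / (2 * Real.pi)) * Real.cos (2 * Real.pi * t * u) := by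
  have restrict := setIntegral_eq_of_subset_of_forall_sdiff_eq_zero (μ := volume)
    (f := fun t ↦ selbergKernel t * Real.cos (2 * Real.pi * t * u)) measurableSet_Ioi
    (Ioc_subset_Ioi_self : Ioc (0 : ℝ) 1 ⊆ Ioi 0) fun t ht ↦ by
      rw [selbergKernel_eq_zero (not_lt.1 fun h ↦ ht.2 ⟨ht.1, h.le⟩), zero_mul]
  rw [selbergMinorant, restrict, intervalIntegral.integral_of_le zero_le_one]
  congr 1
  refine setIntegral_congr_fun measurableSet_Ioc fun t ht ↦ ?_
  simp only [selbergKernel, min_eq_left ht.2]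

theorem mul_selbergMinorant_eq_sin_sq (u : ℝ) :
    Real.pi ^ 2 * u ^ 2 * (1 - u ^ 2) * selbergMinorant u = Real.sin (Real.pi * u) ^ 2 := by
  -- The factor `u ^ 2 * (1 - u ^ 2)` clears the denominators of the product-to-sum antiderivative,
  -- so that no case distinction at `u = 0, ±1` is needed.
  have antideriv (t : ℝ) : HasDerivAt
      (fun t ↦ Real.pi * u * (1 - u ^ 2) * (1 - t) * Real.sin (2 * Real.pi * t * u)
        - (1 - u ^ 2) / 2 * Real.cos (2 * Real.pi * t * u)
        - u ^ 2 / 2 * Real.cos (2 * Real.pi * t) * Real.cos (2 * Real.pi * t * u)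
        - u ^ 3 / 2 * Real.sin (2 * Real.pi * t) * Real.sin (2 * Real.pi * t * u))
      (2 * Real.pi ^ 2 * u ^ 2 * (1 - u ^ 2) *
        ((1 - t + Real.sin (2 * Real.pi * t) / (2 * Real.pi)) *
          Real.cos (2 * Real.pi * t * u))) t := by
    have h₁ : HasDerivAt (fun t : ℝ ↦ 2 * Real.pi * t * u) (2 * Real.pi * u) t := by
      simpa using ((hasDerivAt_id t).const_mul (2 * Real.pi)).mul_const u
    have h₂ : HasDerivAt (fun t : ℝ ↦ 2 * Real.pi * t) (2 * Real.pi) t := by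
      simpa using (hasDerivAt_id t).const_mul (2 * Real.pi)
    have h₃ : HasDerivAt (fun t : ℝ ↦ Real.pi * u * (1 - u ^ 2) * (1 - t))
        (Real.pi * u * (1 - u ^ 2) * (-1)) t := by
      simpa using ((hasDerivAt_id t).const_sub 1).const_mul (Real.pi * u * (1 - u ^ 2))
    convert! (((h₃.mul h₁.sin).sub (h₁.cos.const_mul ((1 - u ^ 2) / 2))).sub
      ((h₂.cos.const_mul (u ^ 2 / 2)).mul h₁.cos)).sub
      ((h₂.sin.const_mul (u ^ 3 / 2)).mul h₁.sin) using 1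
    field_simp
    ring
  have ftc := intervalIntegral.integral_eq_sub_of_hasDerivAt (a := 0) (b := 1)
    (fun t _ ↦ antideriv t) (Continuous.intervalIntegrable (by fun_prop) _ _)
  have cos_eq : Real.cos (2 * Real.pi * u) = 1 - 2 * Real.sin (Real.pi * u) ^ 2 := by
    rw [mul_assoc, Real.cos_two_mul, Real.cos_sq']
    ring
  rw [intervalIntegral.integral_const_mul] at ftc
  simp only [mul_one, cos_eq, sub_self, mul_zero, zero_mul, Real.cos_two_pi, Real.sin_two_pi,
    Real.cos_zero, Real.sin_zero] at ftc
  rw [selbergMinorant_eq_intervalIntegral]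
  linear_combination ftc

theorem selbergMinorant_nonpos {u : ℝ} (hu : 1 < |u|) : selbergMinorant u ≤ 0 := by
  have hu' : 0 < u ^ 2 - 1 := sub_pos.2 ((one_lt_sq_iff_one_lt_abs u).2 hu)
  refine nonpos_of_mul_nonneg_right (a := -(Real.pi ^ 2 * u ^ 2 * (u ^ 2 - 1))) ?_ ?_
  · calc
      0 ≤ Real.sin (Real.pi * u) ^ 2 := sq_nonneg _
      _ = _ := by rw [← mul_selbergMinorant_eq_sin_sq]; ring
  · have : 0 < u ^ 2 := by linarith
    have := Real.pi_pos
    exact neg_lt_zero.2 (by positivity)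

theorem abs_selbergMinorant_le (u : ℝ) : |selbergMinorant u| ≤ 4 := by
  have integrand_le (t : ℝ) (ht : t ∈ uIoc (0 : ℝ) 1) :
      ‖(1 - t + Real.sin (2 * Real.pi * t) / (2 * Real.pi)) * Real.cos (2 * Real.pi * t * u)‖
        ≤ 2 := by
    rw [uIoc_of_le zero_le_one] at ht
    have hsin : |Real.sin (2 * Real.pi * t) / (2 * Real.pi)| ≤ 1 := by
      rw [abs_div, div_le_one (by positivity), abs_of_pos Real.two_pi_pos]
      linarith [Real.abs_sin_le_one (2 * Real.pi * t), Real.pi_gt_three]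
    have hlin : |1 - t| ≤ 1 := by rw [abs_le]; constructor <;> linarith [ht.1, ht.2]
    rw [norm_mul, Real.norm_eq_abs, Real.norm_eq_abs]
    calc
      _ ≤ (1 + 1) * (1 : ℝ) := by
        gcongr
        · exact (abs_add_le _ _).trans (add_le_add hlin hsin)
        · exact Real.abs_cos_le_one _
      _ = 2 := by norm_num
  have h := intervalIntegral.norm_integral_le_of_norm_le_const integrand_le
  rw [Real.norm_eq_abs, sub_zero, abs_one, mul_one] at h
  rw [selbergMinorant_eq_intervalIntegral, abs_mul, abs_two]
  linarith

theorem abs_selbergMinorant_le_inv_one_add_sq (u : ℝ) :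
    |selbergMinorant u| ≤ 20 * (1 + u ^ 2)⁻¹ := by
  rw [← div_eq_mul_inv, le_div_iff₀ (by positivity)]
  rcases le_or_gt (u ^ 2) 4 with hu | hu
  · nlinarith [abs_selbergMinorant_le u, abs_nonneg (selbergMinorant u)]
  have decay : (u ^ 2 * (u ^ 2 - 1)) * |selbergMinorant u| ≤ 1 := by
    have h : Real.pi ^ 2 * (u ^ 2 * (u ^ 2 - 1) * |selbergMinorant u|) ≤ 1 := by
      calc
        _ = |Real.pi ^ 2 * u ^ 2 * (1 - u ^ 2) * selbergMinorant u| := by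
          rw [abs_mul, abs_mul, abs_of_nonneg (by positivity : 0 ≤ Real.pi ^ 2 * u ^ 2),
            abs_of_neg (by linarith : 1 - u ^ 2 < 0)]
          ring
        _ ≤ 1 := by
          rw [mul_selbergMinorant_eq_sin_sq, abs_of_nonneg (sq_nonneg _)]
          exact Real.sin_sq_le_one _
    nlinarith [Real.pi_gt_three,
      mul_nonneg (by nlinarith : 0 ≤ u ^ 2 * (u ^ 2 - 1)) (abs_nonneg (selbergMinorant u))]
  have : 1 + u ^ 2 ≤ u ^ 2 * (u ^ 2 - 1) := by nlinarith
  nlinarith [abs_nonneg (selbergMinorant u)]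

theorem integrable_fourier_selbergKernel_abs :
    Integrable (𝓕 fun t ↦ (selbergKernel |t| : ℂ)) := by
  have hcont : Continuous (𝓕 fun t ↦ (selbergKernel |t| : ℂ)) :=
    VectorFourier.fourierIntegral_continuous Real.continuous_fourierChar continuous_inner
      integrable_selbergKernel_abs.ofReal
  refine (integrable_inv_one_add_sq.const_mul 20).mono' hcont.aestronglyMeasurable
    (.of_forall fun u ↦ ?_)
  rw [fourier_selbergKernel_abs, norm_real]
  exact abs_selbergMinorant_le_inv_one_add_sq u

end SelbergKernel

section PrimePowers

open Filter FourierTransform MeasureTheory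

theorem eventually_exists_ne_zero_abs_log_sub_le {f : ℕ → ℝ} {G : ℂ → ℂ} {A : ℝ}
    (hf : ∀ n, 0 ≤ f n) (hA : 0 < A) (hfG : HasBoundaryPole f G A) {δ : ℝ} (hδ : 0 < δ) :
    ∀ᶠ L : ℝ in atTop, ∃ n : ℕ, n ≠ 0 ∧ f n ≠ 0 ∧ |Real.log n - L| ≤ δ := by
  set k : ℝ → ℂ := fun t ↦ selbergKernel |t| with hk
  have fourier_k (u : ℝ) : 𝓕 (fun t ↦ k (t * δ)) u = (δ⁻¹ * selbergMinorant (u / δ) : ℝ) := by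
    rw [fourier_comp_mul_right k hδ, hk, fourier_selbergKernel_abs]
    push_cast
    rfl
  have continuous_k : Continuous fun t ↦ k (t * δ) :=
    Complex.continuous_ofReal.comp (continuous_selbergKernel.comp (by fun_prop))
  have hasCompactSupport_k : HasCompactSupport fun t ↦ k (t * δ) :=
    (hasCompactSupport_selbergKernel_abs.comp_left Complex.ofReal_zero).comp_homeomorph
      (Homeomorph.mulRight₀ δ hδ.ne')
  have integrable_k : Integrable (𝓕 fun t ↦ k (t * δ)) := by
    rw [funext (fourier_comp_mul_right k hδ)]
    exact (integrable_fourier_selbergKernel_abs.comp_div hδ.ne').const_mul _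
  have k_zero : 0 < (k (0 * δ)).re := by simp [hk, selbergKernel_zero]
  filter_upwards [eventually_exists_re_fourier_log_sub_pos hf hA hfG continuous_k
    hasCompactSupport_k integrable_k k_zero] with L ⟨n, hn, hfn, hpos⟩
  refine ⟨n, hn, hfn, ?_⟩
  by_contra! hfar
  rw [fourier_k, Complex.ofReal_re] at hpos
  refine hpos.not_ge (mul_nonpos_of_nonneg_of_nonpos (inv_pos.2 hδ).le
    (selbergMinorant_nonpos ?_))
  rwa [abs_div, abs_of_pos hδ, one_lt_div hδ]

open ArithmeticFunction.vonMangoldt in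
theorem hasBoundaryPole_residueClass {M : ℕ} [NeZero M] {a : ZMod M} (ha : IsUnit a) :
    HasBoundaryPole (residueClass a) (LFunctionResidueClassAux a) (M.totient : ℝ)⁻¹ where
  summable _ hs := LSeriesSummable_of_abscissaOfAbsConv_lt_re <|
    (abscissaOfAbsConv_residueClass_le_one a).trans_lt (mod_cast hs)
  continuousOn := continuousOn_LFunctionResidueClassAux a
  eq_sub s hs := by
    rw [eqOn_LFunctionResidueClassAux ha hs]
    push_cast
    rfl

open ArithmeticFunction.vonMangoldt in
theorem eventually_exists_isPrimePow_modEq {M a : ℕ} [NeZero M] (ha : a.Coprime M) {c : ℝ}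
    (hc : 0 < c) :
    ∀ᶠ X : ℝ in atTop, ∃ q : ℕ, IsPrimePow q ∧ q ≡ a [MOD M] ∧ X ≤ q ∧ q ≤ (1 + c) * X := by
  have hlog : 0 < Real.log (1 + c) := Real.log_pos (by linarith)
  have near := eventually_exists_ne_zero_abs_log_sub_le (residueClass_nonneg (a : ZMod M))
    (inv_pos.2 (Nat.cast_pos.2 (Nat.totient_pos.2 M.pos_of_neZero)))
    (hasBoundaryPole_residueClass ((ZMod.isUnit_iff_coprime a M).2 ha)) (half_pos hlog)
  have shift : Tendsto (fun X ↦ Real.log X + Real.log (1 + c) / 2) atTop atTop :=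
    tendsto_atTop_add_const_right _ _ Real.tendsto_log_atTop
  filter_upwards [shift.eventually near, eventually_gt_atTop 0] with X ⟨q, hq₀, hq, hnear⟩ hX
  obtain ⟨hqa, hΛ⟩ := Set.indicator_apply_ne_zero.1 hq
  have hq₀' : (0 : ℝ) < q := Nat.cast_pos.2 hq₀.bot_lt
  rw [abs_le] at hnear
  refine ⟨q, ArithmeticFunction.vonMangoldt_ne_zero_iff.1 hΛ,
    (ZMod.natCast_eq_natCast_iff _ _ _).1 hqa, ?_, ?_⟩
  · rw [← Real.log_le_log_iff hX hq₀']
    linarith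
  · rw [← Real.log_le_log_iff hq₀' (by positivity), Real.log_mul (by positivity) hX.ne']
    linarith

end PrimePowers

section FreeGraphs

theorem containsSub_iff_isContained {W V : Type} {H : SimpleGraph W} {G : SimpleGraph V} :
    ContainsSub H G ↔ H ⊑ G :=
  ⟨fun ⟨f, hf⟩ ↦ ⟨⟨f, hf⟩⟩, fun ⟨f⟩ ↦ ⟨f.toHom, f.injective⟩⟩

theorem not_containsSub_completeBipartiteGraph_two_iff {V : Type} [Finite V] {G : SimpleGraph V}
    {d : ℕ} :
    ¬ContainsSub (completeBipartiteGraph (Fin 2) (Fin (d + 1))) G ↔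
      ∀ u v, u ≠ v → (G.commonNeighbors u v).ncard ≤ d := by
  classical
  rw [containsSub_iff_isContained, completeBipartiteGraph_isContained_iff, ← not_iff_not]
  push Not
  simp only [Fintype.card_fin]
  constructor
  · rintro ⟨left, right, hleft, hright, hcomplete⟩
    obtain ⟨u, v, huv, rfl⟩ := Finset.card_eq_two.1 hleft
    refine ⟨u, v, huv, ?_⟩
    rw [← Nat.succ_le_iff, Nat.succ_eq_add_one, ← hright, ← Set.ncard_coe_finset]
    exact Set.ncard_le_ncard fun w hw ↦ ⟨hcomplete (by simp) hw, hcomplete (by simp) hw⟩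
  · rintro ⟨u, v, huv, hcommon⟩
    obtain ⟨right, hsub, hright⟩ := Set.exists_subset_card_eq hcommon
    lift right to Finset V using right.toFinite
    rw [Set.ncard_coe_finset] at hright
    refine ⟨{u, v}, right, Finset.card_pair huv, hright, fun x hx y hy ↦ ?_⟩
    have hy' := hsub hy
    rcases (by simpa using hx : x = u ∨ x = v) with rfl | rfl
    exacts [hy'.1, hy'.2]

/-- There is an `H`-free `(r, k)`-graph; `fGraph H r` is the least such `k`. -/
def ExistsFreeRKGraph {W : Type} (H : SimpleGraph W) (r k : ℕ) : Prop :=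
  ∃ (n : ℕ) (G : SimpleGraph (Fin n)), ¬ContainsSub H G ∧ IsRKGraph G r k

variable {W : Type} {H : SimpleGraph W} {r k : ℕ}

theorem ExistsFreeRKGraph.fGraph_le (h : ExistsFreeRKGraph H r k) : fGraph H r ≤ k :=
  Nat.sInf_le h

theorem ExistsFreeRKGraph.existsFreeRKGraph_fGraph (h : ExistsFreeRKGraph H r k) :
    ExistsFreeRKGraph H r (fGraph H r) :=
  Nat.sInf_mem (s := {k | ExistsFreeRKGraph H r k}) ⟨k, h⟩

theorem ExistsFreeRKGraph.of_injective {V S : Type} [Finite S] {G : SimpleGraph V}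
    (hfree : ¬ContainsSub H G) {e : Fin r × S → V} (he : Function.Injective e)
    (hadj : ∀ i j, i ≠ j → ∃ s t, G.Adj (e (i, s)) (e (j, t))) :
    ExistsFreeRKGraph H r (Nat.card S) := by
  have := Fintype.ofFinite S
  let label := (Fintype.equivFin (Fin r × S)).symm
  refine ⟨_, G.comap (e ∘ label), fun ⟨f, hf⟩ ↦ hfree ?_, fun i ↦ {v | (label v).1 = i}, ?_, ?_, ?_⟩
  · exact ⟨(Hom.comap _ G).comp f, (he.comp label.injective).comp hf⟩
  · exact fun v ↦ ⟨(label v).1, by simp, fun i hi ↦ by simpa [eq_comm] using hi⟩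
  · intro i
    refine (Finset.card_le_card_of_injOn (t := .univ) (fun v ↦ (label v).2) (by simp)
      fun v hv w hw hvw ↦ ?_).trans (by simp)
    simp only [Finset.coe_filter, Finset.mem_univ, true_and, Set.mem_ofPred_eq] at hv hw
    exact label.injective (Prod.ext (hv.trans hw.symm) hvw)
  · intro i j hij
    obtain ⟨s, t, hst⟩ := hadj i j hij
    exact ⟨label.symm (i, s), by simp, label.symm (j, t), by simp, by simpa using hst⟩

end FreeGraphs

section SumCharacterGraph

variable {F Γ : Type} [Field F] [CommGroup Γ] (χ : Fˣ →* Γ)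

/-- Pairs `(x, g)`, `(y, h)` with `x + y ≠ 0` and `χ (x + y) = g h`. -/
def SumCharacterRel (p q : F × Γ) : Prop := ∃ z : Fˣ, (z : F) = p.1 + q.1 ∧ χ z = p.2 * q.2

variable {χ}

theorem SumCharacterRel.symm {p q : F × Γ} (h : SumCharacterRel χ p q) : SumCharacterRel χ q p := by
  simpa only [SumCharacterRel, add_comm, mul_comm] using h

variable (χ)

/-- The bipartite graph of `SumCharacterRel χ` on two copies of `F × Γ`. -/
def sumCharacterGraph : SimpleGraph (Bool × (F × Γ)) where
  Adj u v := u.1 ≠ v.1 ∧ SumCharacterRel χ u.2 v.2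
  symm := ⟨fun _ _ h ↦ ⟨h.1.symm, h.2.symm⟩⟩
  loopless := ⟨fun _ h ↦ h.1 rfl⟩

theorem ncard_setOf_sumCharacterRel_le [Finite F] {p₁ p₂ : F × Γ} (hne : p₁ ≠ p₂) :
    {q | SumCharacterRel χ p₁ q ∧ SumCharacterRel χ p₂ q}.ncard ≤ Nat.card χ.ker := by
  set S := {q | SumCharacterRel χ p₁ q ∧ SumCharacterRel χ p₂ q}
  rcases S.eq_empty_or_nonempty with hempty | ⟨q₀, hq₀⟩
  · simp [hempty]
  choose! z₁ hz₁ hχ₁ using fun q (hq : q ∈ S) ↦ hq.1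
  choose! z₂ hz₂ hχ₂ using fun q (hq : q ∈ S) ↦ hq.2
  have hx : p₁.1 ≠ p₂.1 := fun hx ↦ hne <| Prod.ext hx <| by
    have hz : z₁ q₀ = z₂ q₀ := Units.ext (by rw [hz₁ _ hq₀, hz₂ _ hq₀, hx])
    have := hχ₁ _ hq₀
    rw [hz, hχ₂ _ hq₀] at this
    exact (mul_right_cancel this).symm
  have χ_ratio (q) (hq : q ∈ S) : χ (z₁ q / z₂ q) = p₁.2 / p₂.2 := by
    rw [map_div, hχ₁ q hq, hχ₂ q hq, mul_div_mul_right_eq_div]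
  have ratio_injOn : S.InjOn fun q ↦ z₁ q / z₂ q := by
    intro q hq q' hq' hqq'
    have cross : (p₁.1 + q.1) * (p₂.1 + q'.1) = (p₁.1 + q'.1) * (p₂.1 + q.1) := by
      rw [← hz₁ q hq, ← hz₂ q' hq', ← hz₁ q' hq', ← hz₂ q hq]
      exact congrArg Units.val (div_eq_div_iff_mul_eq_mul.1 hqq')
    have hfst : q.1 = q'.1 := mul_left_cancel₀ (sub_ne_zero.2 hx) (by linear_combination -cross)
    have hz : z₁ q = z₁ q' := Units.ext (by rw [hz₁ q hq, hz₁ q' hq', hfst])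
    have := hχ₁ q hq
    rw [hz, hχ₁ q' hq'] at this
    exact Prod.ext hfst (mul_left_cancel this).symm
  refine Set.ncard_le_ncard_of_injOn (t := (χ.ker : Set Fˣ))
    (fun q ↦ (z₁ q / z₂ q) / (z₁ q₀ / z₂ q₀)) (fun q hq ↦ ?_) fun q hq q' hq' hqq' ↦ ?_
  · rw [SetLike.mem_coe, MonoidHom.mem_ker, map_div, χ_ratio q hq, χ_ratio q₀ hq₀, div_self']
  · exact ratio_injOn hq hq' (div_left_injective hqq')

theorem ncard_commonNeighbors_sumCharacterGraph_le [Finite F] [Finite Γ] {u v : Bool × (F × Γ)}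
    (hne : u ≠ v) :
    ((sumCharacterGraph χ).commonNeighbors u v).ncard ≤ Nat.card χ.ker := by
  rcases ((sumCharacterGraph χ).commonNeighbors u v).eq_empty_or_nonempty with hempty | ⟨w₀, hw₀⟩
  · simp [hempty]
  have hside : u.1 = v.1 := Bool.eq_not_of_ne hw₀.1.1 |>.trans (Bool.eq_not_of_ne hw₀.2.1).symm
  have snd_injOn : ((sumCharacterGraph χ).commonNeighbors u v).InjOn Prod.snd :=
    fun w hw w' hw' h ↦ Prod.ext
      ((Bool.eq_not_of_ne hw.1.1.symm).trans (Bool.eq_not_of_ne hw'.1.1.symm).symm) h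
  exact (Set.ncard_le_ncard_of_injOn Prod.snd
    (t := {q | SumCharacterRel χ u.2 q ∧ SumCharacterRel χ v.2 q})
    (fun w hw ↦ ⟨hw.1.2, hw.2.2⟩) snd_injOn).trans
    (ncard_setOf_sumCharacterRel_le χ fun h ↦ hne (Prod.ext hside h))

end SumCharacterGraph

section Construction

variable {F A B : Type} [Field F] [CommGroup A] [CommGroup B]

/- With `y ↦ -y` in place of `y ↦ -y - 1` the parts with `x = y` could not be joined in either
orientation; with the shift, both orientations fail only if `x - y = 1 = y - x`. -/
theorem exists_adj_sumCharacterGraph (χ : Fˣ →* A × B) {x y : F} (hxy : x - y ≠ 1) (s : B) (t : A) :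
    ∃ α β, (sumCharacterGraph χ).Adj (true, x, α, s) (false, -y - 1, t, β) := by
  let z := Units.mk0 (x - y - 1) (sub_ne_zero.2 hxy)
  refine ⟨(χ z).1 / t, (χ z).2 / s, by simp, z, ?_, ?_⟩
  · simp only [z, Units.val_mk0]
    ring
  · ext <;> simp

variable [Finite F]

theorem existsFreeRKGraph_of_card_ker_le [Finite A] [Finite B] (χ : Fˣ →* A × B) {d r : ℕ}
    (h₂ : (2 : F) ≠ 0) (hd : Nat.card χ.ker ≤ d)
    (hr : r ≤ Nat.card F * min (Nat.card A) (Nat.card B)) :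
    ExistsFreeRKGraph (completeBipartiteGraph (Fin 2) (Fin (d + 1))) r
      (Nat.card A + Nat.card B) := by
  obtain ⟨ι⟩ : Nonempty (Fin r ↪ F × Fin (min (Nat.card A) (Nat.card B))) := by
    have := Fintype.ofFinite F
    exact Function.Embedding.nonempty_of_card_le (by simpa using hr)
  let tA := (Fin.castLEEmb (min_le_left (Nat.card A) (Nat.card B))).trans
    (Finite.equivFin A).symm.toEmbedding
  let tB := (Fin.castLEEmb (min_le_right (Nat.card A) (Nat.card B))).trans
    (Finite.equivFin B).symm.toEmbedding
  let e : Fin r × (A ⊕ B) → Bool × (F × (A × B))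
    | (i, .inl α) => (true, (ι i).1, α, tB (ι i).2)
    | (i, .inr β) => (false, -(ι i).1 - 1, tA (ι i).2, β)
  have he : Function.Injective e := by
    rintro ⟨i, α | β⟩ ⟨j, α' | β'⟩ h
    · simp only [e, Prod.mk.injEq, true_and, tB.injective.eq_iff] at h
      rw [ι.injective (Prod.ext h.1 h.2.2), h.2.1]
    · simp [e] at h
    · simp [e] at h
    · simp only [e, Prod.mk.injEq, true_and, tA.injective.eq_iff, sub_left_inj, neg_inj] at h
      rw [ι.injective (Prod.ext h.1 h.2.1), h.2.2]
  rw [← Nat.card_sum]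
  refine .of_injective (G := sumCharacterGraph χ)
    (not_containsSub_completeBipartiteGraph_two_iff.2 fun u v huv ↦
      (ncard_commonNeighbors_sumCharacterGraph_le χ huv).trans hd) he fun i j _ ↦ ?_
  by_cases hij : (ι i).1 - (ι j).1 = 1
  · have hji : (ι j).1 - (ι i).1 ≠ 1 := fun hji ↦ h₂ (by linear_combination -hij - hji)
    obtain ⟨α, β, h⟩ := exists_adj_sumCharacterGraph χ hji (tB (ι j).2) (tA (ι i).2)
    exact ⟨.inr β, .inl α, h.symm⟩
  · obtain ⟨α, β, h⟩ := exists_adj_sumCharacterGraph χ hij (tB (ι i).2) (tA (ι j).2)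
    exact ⟨.inl α, .inr β, h⟩

theorem exists_subgroup_index_eq {G : Type*} [CommGroup G] [IsCyclic G] [Finite G] {a : ℕ}
    (ha : a ∣ Nat.card G) : ∃ H : Subgroup G, H.index = a :=
  ⟨_, (IsCyclic.index_powMonoidHom_range G a).trans (Nat.gcd_eq_right ha)⟩

theorem card_inf_le {G : Type*} [Group G] [Finite G] {H K : Subgroup G} {m : ℕ}
    (hHK : H.index.Coprime K.index) (hcard : Nat.card G = m * (H.index * K.index)) :
    Nat.card (H ⊓ K : Subgroup G) ≤ m := by
  obtain ⟨c, hc⟩ := hHK.mul_dvd_of_dvd_of_dvd (Subgroup.index_dvd_of_le (inf_le_left (b := K)))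
    (Subgroup.index_dvd_of_le (inf_le_right (a := H)))
  have hpos : 0 < H.index * K.index :=
    mul_pos H.index_ne_zero_of_finite.bot_lt K.index_ne_zero_of_finite.bot_lt
  have hm : Nat.card (H ⊓ K : Subgroup G) * c = m := by
    refine Nat.eq_of_mul_eq_mul_right hpos ?_
    rw [← hcard, ← (H ⊓ K).card_mul_index, hc]
    ring
  have hc₀ : c ≠ 0 := by
    rintro rfl
    exact (H ⊓ K).index_ne_zero_of_finite (by rw [hc, mul_zero])
  exact hm ▸ Nat.le_mul_of_pos_right _ hc₀.bot_lt

theorem existsFreeRKGraph_of_field {d r m a b : ℕ} (h₂ : (2 : F) ≠ 0) (hab : a.Coprime b)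
    (hcard : Nat.card Fˣ = m * (a * b)) (hm : m ≤ d) (hr : r ≤ Nat.card F * min a b) :
    ExistsFreeRKGraph (completeBipartiteGraph (Fin 2) (Fin (d + 1))) r (a + b) := by
  obtain ⟨H, rfl⟩ := exists_subgroup_index_eq (G := Fˣ) (a := a) ⟨m * b, by rw [hcard]; ring⟩
  obtain ⟨K, rfl⟩ := exists_subgroup_index_eq (G := Fˣ) (a := b) ⟨m * H.index, by rw [hcard]; ring⟩
  refine existsFreeRKGraph_of_card_ker_le ((QuotientGroup.mk' H).prod (QuotientGroup.mk' K)) h₂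
    ?_ hr
  rw [MonoidHom.ker_prod, QuotientGroup.ker_mk', QuotientGroup.ker_mk']
  exact (card_inf_le hab hcard).trans hm

end Construction

section LowerBound

variable {V : Type} [Fintype V] {G : SimpleGraph V} {r k d : ℕ}

theorem IsRKGraph.card_le (h : IsRKGraph G r k) : Fintype.card V ≤ r * k := by
  classical
  obtain ⟨P, hP, hcard, -⟩ := h
  have hcover : (Finset.univ : Finset V) ⊆ Finset.univ.biUnion P := fun v _ ↦ by
    simpa using (hP v).exists
  calc Fintype.card V ≤ (Finset.univ.biUnion P).card := Finset.card_le_card hcover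
    _ ≤ r * k := by simpa using Finset.card_biUnion_le_card_mul .univ P k fun i _ ↦ hcard i

theorem IsRKGraph.mul_sub_one_le_sum_degree [DecidableRel G.Adj] (h : IsRKGraph G r k) :
    r * (r - 1) ≤ ∑ v, G.degree v := by
  classical
  obtain ⟨P, hP, -, hadj⟩ := h
  choose part hpart using fun v ↦ (hP v).exists
  have surj : Set.SurjOn (fun e : G.Dart ↦ (part e.fst, part e.snd)) (Finset.univ : Finset G.Dart)
      (Finset.univ : Finset (Fin r)).offDiag := by
    rintro ⟨i, j⟩ hij
    obtain ⟨u, hu, w, hw, huw⟩ := hadj i j (by simpa using hij)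
    exact ⟨⟨(u, w), huw⟩, by simp,
      Prod.ext ((hP u).unique (hpart u) hu) ((hP w).unique (hpart w) hw)⟩
  calc r * (r - 1) = (Finset.univ : Finset (Fin r)).offDiag.card := by
        rw [Finset.offDiag_card, Finset.card_fin, Nat.mul_sub_one]
    _ ≤ (Finset.univ : Finset G.Dart).card := Finset.card_le_card_of_surjOn _ surj
    _ = ∑ v, G.degree v := G.dart_card_eq_sum_degrees

theorem sum_degree_sq_eq_sum_ncard_commonNeighbors [DecidableRel G.Adj] :
    ∑ v, G.degree v ^ 2 = ∑ u, ∑ w, (G.commonNeighbors u w).ncard := by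
  classical
  have hdegree (v : V) :
      G.degree v ^ 2 = ∑ p : V × V, if v ∈ G.commonNeighbors p.1 p.2 then 1 else 0 := by
    rw [sq, ← G.card_neighborFinset_eq_degree, ← Finset.card_product, ← Finset.card_filter]
    congr 1
    ext p
    simp [mem_commonNeighbors, G.adj_comm v]
  simp only [hdegree]
  rw [Finset.sum_comm, Fintype.sum_prod_type]
  refine Finset.sum_congr rfl fun u _ ↦ Finset.sum_congr rfl fun w _ ↦ ?_
  rw [← Finset.card_filter, ← Set.ncard_coe_finset]
  simp

theorem sum_degree_sq_le [DecidableRel G.Adj]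
    (hd : ∀ u v, u ≠ v → (G.commonNeighbors u v).ncard ≤ d) :
    ∑ v, G.degree v ^ 2 ≤ ∑ v, G.degree v + d * Fintype.card V ^ 2 := by
  classical
  rw [sum_degree_sq_eq_sum_ncard_commonNeighbors]
  calc ∑ u, ∑ w, (G.commonNeighbors u w).ncard
      ≤ ∑ u, ∑ w, ((if u = w then G.degree u else 0) + d) := by
        refine Finset.sum_le_sum fun u _ ↦ Finset.sum_le_sum fun w _ ↦ ?_
        split_ifs with huw
        · subst huw
          rw [commonNeighbors_eq, Set.inter_self, Set.ncard_eq_toFinset_card']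
          exact Nat.le_add_right _ _
        · simpa using hd u w huw
    _ = ∑ v, G.degree v + d * Fintype.card V ^ 2 := by
        simp only [Finset.sum_add_distrib, Finset.sum_ite_eq, Finset.mem_univ, if_true,
          Finset.sum_const, Finset.card_univ, smul_eq_mul]
        ring

theorem sum_degree_sq_sum_le [DecidableRel G.Adj]
    (hd : ∀ u v, u ≠ v → (G.commonNeighbors u v).ncard ≤ d) :
    (∑ v, G.degree v) ^ 2 ≤ Fintype.card V * (∑ v, G.degree v + d * Fintype.card V ^ 2) :=
  sq_sum_le_card_mul_sum_sq.trans (Nat.mul_le_mul_left _ (sum_degree_sq_le hd))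

theorem IsRKGraph.sub_one_mul_sub_le (h : IsRKGraph G r k)
    (hd : ∀ u v, u ≠ v → (G.commonNeighbors u v).ncard ≤ d) (hr : 1 ≤ r) :
    ((r : ℝ) - 1) * (r - 1 - k) ≤ d * r * k ^ 3 := by
  classical
  have hr' : (1 : ℝ) ≤ r := mod_cast hr
  rcases le_total ((r : ℝ) - 1) k with hk | hk
  · exact (mul_nonpos_of_nonneg_of_nonpos (by linarith) (by linarith)).trans (by positivity)
  have hn := h.card_le
  have hS := h.mul_sub_one_le_sum_degree
  have hnS := sum_degree_sq_sum_le hd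
  generalize Fintype.card V = n at hn hnS
  generalize ∑ v, G.degree v = S at hS hnS
  rify [hr] at hn hS hnS
  have hSn : (r : ℝ) * (r - 1 - k) ≤ S - n := by linarith
  refine le_of_mul_le_mul_left (a := (r : ℝ) ^ 2) ?_ (by positivity)
  calc (r : ℝ) ^ 2 * ((r - 1) * (r - 1 - k)) = r * (r - 1) * (r * (r - 1 - k)) := by ring
    _ ≤ S * (S - n) := by
        have : 0 ≤ (r : ℝ) - 1 - k := by linarith
        gcongr
    _ ≤ d * n ^ 3 := by linarith
    _ ≤ d * (r * k) ^ 3 := by gcongr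
    _ = r ^ 2 * (d * r * k ^ 3) := by ring

end LowerBound

section Asymptotics

theorem rpow_one_third_pow_three {x : ℝ} (hx : 0 ≤ x) : (x ^ ((1 : ℝ) / 3)) ^ 3 = x := by
  rw [one_div]
  exact_mod_cast Real.rpow_inv_natCast_pow hx three_ne_zero

theorem tendsto_natCast_rpow_one_third_atTop :
    Filter.Tendsto (fun r : ℕ ↦ (r : ℝ) ^ ((1 : ℝ) / 3)) .atTop .atTop :=
  (tendsto_rpow_atTop (by norm_num)).comp tendsto_natCast_atTop_atTop

theorem eventually_mul_pow_six_lt {c a : ℝ} (hc : 0 ≤ c) (ha : a < 1) :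
    ∀ᶠ x : ℝ in .atTop, a * x ^ 6 < (x ^ 3 - 1) * (x ^ 3 - 1 - c * x) := by
  have hsq : Filter.Tendsto (fun x : ℝ ↦ (1 - a) * x ^ 2) .atTop .atTop :=
    (Filter.tendsto_pow_atTop two_ne_zero).const_mul_atTop (sub_pos.2 ha)
  filter_upwards [hsq.eventually_gt_atTop (2 + c), Filter.eventually_ge_atTop 1] with x hx hx₁
  have hx₄ : x ^ 3 ≤ x ^ 4 := pow_le_pow_right₀ hx₁ (by norm_num)
  have hlead : (2 + c) * x ^ 4 < (1 - a) * x ^ 2 * x ^ 4 := by gcongr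
  have hcx : 0 ≤ c * x := by positivity
  linarith

theorem eventually_mul_rpow_le_of_existsFreeRKGraph {d : ℕ} {c : ℝ} (hc : d * c ^ 3 < 1) :
    ∀ᶠ r : ℕ in .atTop, ∀ k,
      ExistsFreeRKGraph (completeBipartiteGraph (Fin 2) (Fin (d + 1))) r k →
        c * (r : ℝ) ^ ((1 : ℝ) / 3) ≤ k := by
  classical
  rcases le_total c 0 with hc₀ | hc₀
  · exact .of_forall fun r k _ ↦
      (mul_nonpos_of_nonpos_of_nonneg hc₀ (by positivity)).trans k.cast_nonneg
  filter_upwards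
    [tendsto_natCast_rpow_one_third_atTop.eventually (eventually_mul_pow_six_lt hc₀ hc),
    Filter.eventually_ge_atTop 1] with r hlarge hr k ⟨n, G, hfree, hrk⟩
  have hcount := hrk.sub_one_mul_sub_le (not_containsSub_completeBipartiteGraph_two_iff.1 hfree) hr
  have hr₁ : (1 : ℝ) ≤ r := mod_cast hr
  have hx := rpow_one_third_pow_three (Nat.cast_nonneg (α := ℝ) r)
  set x := (r : ℝ) ^ ((1 : ℝ) / 3)
  by_contra! hk
  refine hlarge.not_ge ?_
  calc (x ^ 3 - 1) * (x ^ 3 - 1 - c * x) ≤ (r - 1) * (r - 1 - k) := by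
        rw [hx]
        have : 0 ≤ (r : ℝ) - 1 := by linarith
        gcongr
    _ ≤ d * r * k ^ 3 := hcount
    _ ≤ d * r * (c * x) ^ 3 := by gcongr
    _ = d * c ^ 3 * x ^ 6 := by rw [← hx]; ring

end Asymptotics

section Arithmetic

theorem exists_mul_succ_le_lt (d : ℕ) : ∃ m, m * (m + 1) ≤ d ∧ d < (m + 1) * (m + 2) := by
  induction d with
  | zero => exact ⟨0, by simp⟩
  | succ d ih =>
    obtain ⟨m, hle, hlt⟩ := ih
    rcases (Nat.succ_le_of_lt hlt).lt_or_eq with h | h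
    · exact ⟨m, hle.trans d.le_succ, h⟩
    · exact ⟨m + 1, h.ge, by nlinarith⟩

theorem exists_odd_eq_mul_add_one {e q : ℕ} (he : 1 < e) (hq : q ≡ e + 1 [MOD 2 * e]) :
    ∃ a, Odd a ∧ q = e * a + 1 := by
  have hmod : q % (2 * e) = e + 1 := Eq.trans hq (Nat.mod_eq_of_lt (by omega))
  refine ⟨2 * (q / (2 * e)) + 1, odd_two_mul_add_one _, ?_⟩
  conv_lhs => rw [← Nat.div_add_mod q (2 * e), hmod]
  ring

theorem exists_coprime_forall_modEq {e o : ℕ} (he : Even e) (ho : Odd o) (he₀ : e ≠ 0)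
    (hcop : e.Coprime o) :
    ∃ c, c.Coprime (2 * e * o) ∧ ∀ q, q ≡ c [MOD 2 * e * o] →
      ∃ a b, Odd a ∧ q = e * a + 1 ∧ q + 1 = o * b := by
  have hcop' : (2 * e).Coprime o := (Nat.coprime_two_left.2 ho).mul_left hcop
  obtain ⟨c, hce, hco⟩ := Nat.chineseRemainder hcop' (e + 1) (o - 1)
  have hc₁ : c + 1 ≡ 0 [MOD o] := by
    simpa [Nat.sub_add_cancel ho.pos, Nat.ModEq] using hco.add_right 1
  refine ⟨c, .mul_right ?_ ?_, fun q hq ↦ ?_⟩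
  · rw [Nat.Coprime, hce.gcd_eq, ← Nat.Coprime]
    exact .mul_right (Nat.coprime_two_right.2 he.add_one) (by simp)
  · rw [Nat.Coprime, hco.gcd_eq, ← Nat.Coprime]
    exact (Nat.coprime_self_sub_right ho.pos).2 (by simp) |>.symm
  · obtain ⟨a, ha, hqa⟩ := exists_odd_eq_mul_add_one
      (by obtain ⟨i, rfl⟩ := he; omega) (hq.of_mul_right o |>.trans hce)
    obtain ⟨b, hqb⟩ :=
      (Nat.modEq_zero_iff_dvd).1 (((hq.of_mul_left (2 * e)).add_right 1).trans hc₁)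
    exact ⟨a, b, ha, hqa, hqb⟩

end Arithmetic

section Constants

theorem rpow_neg_one_third_pow_three {x : ℝ} (hx : 0 ≤ x) : (x ^ (-(1 / 3 : ℝ))) ^ 3 = x⁻¹ := by
  rw [Real.rpow_neg hx, inv_pow, rpow_one_third_pow_three hx]

theorem rpow_neg_five_thirds_pow_three {x : ℝ} (hx : 0 ≤ x) :
    (x ^ (-(5 / 3 : ℝ))) ^ 3 = (x ^ 5)⁻¹ := by
  rw [← Real.rpow_natCast, ← Real.rpow_mul hx, ← Real.rpow_natCast, ← Real.rpow_neg hx]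
  norm_num

theorem one_sub_mul_rpow_neg_half {d s : ℝ} (hd : 0 < d) (hs : √d = s + 3 / 2) :
    1 - 1.5 * d ^ (-(1 / 2 : ℝ)) = s / √d := by
  have : 0 < √d := Real.sqrt_pos.2 hd
  rw [Real.rpow_neg hd.le, ← Real.sqrt_eq_rpow]
  field_simp
  linarith

theorem one_div_add_one_div_mul_rpow_le {d m : ℕ} (hd : 3 ≤ d) (hm : d < (m + 1) * (m + 2)) :
    (1 / m + 1 / (m + 1 : ℕ)) * ((m + 1 : ℕ) : ℝ) ^ ((1 : ℝ) / 3) ≤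
      2 * (d : ℝ) ^ (-(1 / 3 : ℝ)) * (1 - 1.5 * (d : ℝ) ^ (-(1 / 2 : ℝ))) ^ (-(5 / 3 : ℝ)) := by
  have hd' : (3 : ℝ) ≤ d := mod_cast hd
  have hm' : (d : ℝ) < (m + 1) * (m + 2) := mod_cast hm
  obtain ⟨s, hs⟩ : ∃ s, √(d : ℝ) = s + 3 / 2 := ⟨√d - 3 / 2, by ring⟩
  have hs₀ : 0 < s := by
    have : 3 / 2 < √(d : ℝ) := Real.lt_sqrt_of_sq_lt (by linarith)
    linarith
  have hsm : s ≤ m := by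
    have : √(d : ℝ) ≤ m + 3 / 2 := Real.sqrt_le_iff.2 ⟨by positivity, by linarith⟩
    linarith
  have hm₀ : (0 : ℝ) < m := hs₀.trans_le hsm
  have hd_eq : (d : ℝ) = (s + 3 / 2) ^ 2 := by rw [← hs, Real.sq_sqrt (by positivity)]
  rw [one_sub_mul_rpow_neg_half (by positivity) hs]
  refine (pow_le_pow_iff_left₀ (by positivity) (by positivity) three_ne_zero).1 ?_
  rw [mul_pow, mul_pow, mul_pow, rpow_one_third_pow_three (by positivity),
    rpow_neg_one_third_pow_three (by positivity), rpow_neg_five_thirds_pow_three (by positivity),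
    hs, hd_eq]
  calc (1 / (m : ℝ) + 1 / (m + 1 : ℕ)) ^ 3 * (m + 1 : ℕ) = (2 + 1 / m) ^ 3 / (m + 1) ^ 2 := by
        push_cast
        field_simp
        ring
    _ ≤ (2 + 3 / s) ^ 3 / s ^ 2 := by
        gcongr
        · norm_num
        · linarith
    _ = 2 ^ 3 * ((s + 3 / 2) ^ 2)⁻¹ * ((s / (s + 3 / 2)) ^ 5)⁻¹ := by
        field_simp

end Constants

section UpperBound

variable {d e o a b q r : ℕ}

theorem coprime_of_add_one_eq (ha : Odd a) (hqa : q = e * a + 1) (hqb : q + 1 = o * b) :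
    a.Coprime b := by
  have h : a.Coprime (o * b) := by
    rw [← hqb, hqa, add_assoc, Nat.coprime_mul_right_add_right]
    exact Nat.coprime_two_right.2 ha
  exact h.coprime_mul_left_right

theorem existsFreeRKGraph_of_isPrimePow (hq : IsPrimePow q) (he : Even e) (ha : Odd a)
    (hqa : q = e * a + 1) (hqb : q + 1 = o * b) (hd : e * o ≤ d) (hr : r ≤ q ^ 2 * min a b) :
    ExistsFreeRKGraph (completeBipartiteGraph (Fin 2) (Fin (d + 1))) r (a + b) := by
  obtain ⟨p, j, hp, hj, hpq⟩ := hq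
  have : Fact p.Prime := ⟨hp.nat_prime⟩
  have hcard : Nat.card (GaloisField p (2 * j)) = q ^ 2 := by
    rw [GaloisField.card p (2 * j) (by omega), mul_comm 2 j, pow_mul, hpq]
  have hp₂ : p ≠ 2 := by
    have hq : Odd (p ^ j) := by
      rw [hpq, hqa]
      exact (he.mul_right a).add_one
    rintro rfl
    exact Nat.not_odd_iff_even.2 (even_two.pow_of_ne_zero hj.ne') hq
  have h₂ : (2 : GaloisField p (2 * j)) ≠ 0 :=
    Ring.two_ne_zero (by rwa [ringChar.eq (GaloisField p (2 * j)) p])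
  have hunits : Nat.card (GaloisField p (2 * j))ˣ = e * o * (a * b) := by
    have : q ^ 2 = e * o * (a * b) + 1 := by linear_combination q * hqa + hqa + e * a * hqb
    rw [Nat.card_units, hcard, this, Nat.add_sub_cancel]
  exact existsFreeRKGraph_of_field h₂ (coprime_of_add_one_eq ha hqa hqb) hunits hd (by rwa [hcard])

theorem le_sq_mul_min (he : e ≠ 0) (hqa : q = e * a + 1) (hqb : q + 1 = o * b)
    (hr : r * max e o ≤ (q - 1) ^ 3) : r ≤ q ^ 2 * min a b := by
  have hmin : q - 1 ≤ min a b * max e o := by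
    rcases min_choice a b with h | h <;> rw [h]
    · nlinarith [le_max_left e o, Nat.sub_add_cancel (n := q) (m := 1) (by omega)]
    · nlinarith [le_max_right e o, Nat.sub_add_cancel (n := q) (m := 1) (by omega)]
  refine Nat.le_of_mul_le_mul_right (c := max e o) ?_ (by positivity)
  calc r * max e o ≤ (q - 1) ^ 2 * (q - 1) := hr.trans_eq (pow_succ _ 2)
    _ ≤ q ^ 2 * (min a b * max e o) :=
      Nat.mul_le_mul (Nat.pow_le_pow_left (Nat.sub_le q 1) 2) hmin
    _ = q ^ 2 * min a b * max e o := by ring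

theorem cast_add_le (he : e ≠ 0) (ho : o ≠ 0) (hqa : q = e * a + 1) (hqb : q + 1 = o * b) :
    ((a + b : ℕ) : ℝ) ≤ (1 / e + 1 / o) * (q + 1) := by
  have ha : (a : ℝ) ≤ 1 / e * (q + 1) := by
    rw [one_div_mul_eq_div, le_div_iff₀ (by positivity)]
    exact_mod_cast (by linarith : a * e ≤ q + 1)
  have hb : (b : ℝ) = 1 / o * (q + 1) := by
    rw [one_div_mul_eq_div, eq_div_iff (by positivity)]
    exact_mod_cast (by linarith : b * o = q + 1)
  push_cast
  linarith

theorem eventually_exists_existsFreeRKGraph_le (he : Even e) (ho : Odd o) (he₀ : e ≠ 0)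
    (hcop : e.Coprime o) (hd : e * o ≤ d) {ε : ℝ} (hε : 0 < ε) :
    ∀ᶠ r : ℕ in .atTop, ∃ k,
      ExistsFreeRKGraph (completeBipartiteGraph (Fin 2) (Fin (d + 1))) r k ∧
        k ≤ ((1 / e + 1 / o) * ((max e o : ℕ) : ℝ) ^ ((1 : ℝ) / 3) + ε) *
          (r : ℝ) ^ ((1 : ℝ) / 3) := by
  obtain ⟨t, ht, hres⟩ := exists_coprime_forall_modEq he ho he₀ hcop
  have ho₀ : o ≠ 0 := ho.pos.ne'
  have : NeZero (2 * e * o) := ⟨by positivity⟩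
  set K : ℝ := 1 / e + 1 / o
  set μ : ℝ := ((max e o : ℕ) : ℝ) ^ ((1 : ℝ) / 3)
  have hK : 0 < K := by positivity
  have hM : (0 : ℝ) < (max e o : ℕ) := by positivity
  have hμ : 0 < μ := by positivity
  let c := ε / (2 * K * μ)
  have hc : 0 < c := by positivity
  have hX : Filter.Tendsto (fun x ↦ 1 + μ * x) .atTop .atTop :=
    Filter.tendsto_atTop_add_const_left _ _ (Filter.tendsto_id.const_mul_atTop hμ)
  filter_upwards [tendsto_natCast_rpow_one_third_atTop.eventually
      ((hX.eventually (eventually_exists_isPrimePow_modEq ht hc)).and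
        (Filter.eventually_ge_atTop (K * (2 + c) / (ε / 2))))] with r ⟨⟨q, hq, hqt, hlo, hhi⟩, hx⟩
  have hx₃ := rpow_one_third_pow_three (Nat.cast_nonneg (α := ℝ) r)
  set x := (r : ℝ) ^ ((1 : ℝ) / 3)
  rw [div_le_iff₀ (by positivity)] at hx
  obtain ⟨a, b, ha, hqa, hqb⟩ := hres q hqt
  have hr : r * max e o ≤ (q - 1) ^ 3 := by
    rify [hq.one_lt.le]
    calc (r : ℝ) * (max (e : ℝ) o) = (μ * x) ^ 3 := by
          rw [mul_pow, hx₃, rpow_one_third_pow_three hM.le]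
          push_cast
          ring
      _ ≤ (q - 1) ^ 3 := by
          gcongr
          linarith
  refine ⟨a + b,
    existsFreeRKGraph_of_isPrimePow hq he ha hqa hqb hd (le_sq_mul_min he₀ hqa hqb hr), ?_⟩
  calc ((a + b : ℕ) : ℝ) ≤ K * (q + 1) := cast_add_le he₀ ho₀ hqa hqb
    _ ≤ K * ((1 + c) * (1 + μ * x) + 1) := by gcongr
    _ = K * μ * x + K * (2 + c) + ε / 2 * x := by
        simp only [c]
        field_simp
        ring
    _ ≤ (K * μ + ε) * x := by linarith

theorem eventually_exists_existsFreeRKGraph_of_three_le (hd : 3 ≤ d) {ε : ℝ}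
    (hε : 0 < ε) :
    ∀ᶠ r : ℕ in .atTop, ∃ k,
      ExistsFreeRKGraph (completeBipartiteGraph (Fin 2) (Fin (d + 1))) r k ∧
        k ≤ (2 * (d : ℝ) ^ (-(1 / 3 : ℝ)) *
          (1 - 1.5 * (d : ℝ) ^ (-(1 / 2 : ℝ))) ^ (-(5 / 3 : ℝ)) + ε) * (r : ℝ) ^ ((1 : ℝ) / 3) := by
  obtain ⟨m, hle, hlt⟩ := exists_mul_succ_le_lt d
  have hm : m ≠ 0 := by rintro rfl; omega
  have hconst := one_div_add_one_div_mul_rpow_le hd hlt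
  rcases m.even_or_odd with hm' | hm'
  · filter_upwards [eventually_exists_existsFreeRKGraph_le hm' hm'.add_one hm (by simp) hle hε]
      with r ⟨k, hk, hkr⟩
    rw [max_eq_right (m.le_add_right 1)] at hkr
    exact ⟨k, hk, hkr.trans (by gcongr)⟩
  · rw [mul_comm] at hle
    filter_upwards [eventually_exists_existsFreeRKGraph_le hm'.add_one hm' m.succ_ne_zero (by simp)
      hle hε] with r ⟨k, hk, hkr⟩
    rw [max_eq_left (m.le_add_right 1), add_comm (1 / _) (1 / (m : ℝ))] at hkr
    exact ⟨k, hk, hkr.trans (by gcongr)⟩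

end UpperBound

theorem stmt1_general {d : ℕ} (hd : 3 ≤ d) {ε : ℝ} (hε : 0 < ε) :
    ∀ᶠ r : ℕ in .atTop,
      ((d : ℝ) ^ (-(1 / 3 : ℝ)) - ε) * (r : ℝ) ^ ((1 : ℝ) / 3) ≤
          fGraph (completeBipartiteGraph (Fin 2) (Fin (d + 1))) r ∧
        fGraph (completeBipartiteGraph (Fin 2) (Fin (d + 1))) r ≤
          (2 * (d : ℝ) ^ (-(1 / 3 : ℝ)) *
            (1 - 1.5 * (d : ℝ) ^ (-(1 / 2 : ℝ))) ^ (-(5 / 3 : ℝ)) + ε) *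
              (r : ℝ) ^ ((1 : ℝ) / 3) := by
  have hd₀ : (0 : ℝ) < d := by positivity
  have hlower : d * ((d : ℝ) ^ (-(1 / 3 : ℝ)) - ε) ^ 3 < 1 := by
    calc d * ((d : ℝ) ^ (-(1 / 3 : ℝ)) - ε) ^ 3 < d * ((d : ℝ) ^ (-(1 / 3 : ℝ))) ^ 3 :=
          mul_lt_mul_of_pos_left (Odd.strictMono_pow (n := 3) (by decide) (sub_lt_self _ hε)) hd₀
      _ = 1 := by rw [rpow_neg_one_third_pow_three hd₀.le, mul_inv_cancel₀ hd₀.ne']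
  filter_upwards [eventually_mul_rpow_le_of_existsFreeRKGraph hlower,
    eventually_exists_existsFreeRKGraph_of_three_le hd hε] with r hlow ⟨k, hk, hkr⟩
  exact ⟨hlow _ hk.existsFreeRKGraph_fGraph, (Nat.cast_le.2 hk.fGraph_le).trans hkr⟩

/-- For every integer `d ≥ 12` and every `ε > 0`, for all sufficiently large `r`,
`(d^{−1/3} − ε)·r^{1/3} ≤ f(r, K_{2,d+1}) ≤ (2·d^{−1/3}·(1 − 1.5·d^{−1/2})^{−5/3} + ε)·r^{1/3}`. -/
theorem stmt1 (d : ℕ) (hd : 12 ≤ d) (ε : ℝ) (hε : 0 < ε) :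
    ∃ r₀ : ℕ, ∀ r : ℕ, r₀ ≤ r →
      ((d : ℝ) ^ (-(1 / 3 : ℝ)) - ε) * (r : ℝ) ^ ((1 : ℝ) / 3)
        ≤ (fGraph (completeBipartiteGraph (Fin 2) (Fin (d + 1))) r : ℝ) ∧
      (fGraph (completeBipartiteGraph (Fin 2) (Fin (d + 1))) r : ℝ)
        ≤ (2 * (d : ℝ) ^ (-(1 / 3 : ℝ)) * (1 - 1.5 * (d : ℝ) ^ (-(1 / 2 : ℝ))) ^ (-(5 / 3 : ℝ)) + ε) *
            (r : ℝ) ^ ((1 : ℝ) / 3) :=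
  Filter.eventually_atTop.1 (stmt1_general (by omega) hε)
end

section
/- For every real ε > 0 there exists r₀ such that for all integers r ≥ r₀ one has f(r, C_6) ≤ (2 + ε) · r^{1/2}, where C_6 denotes the cycle of length 6. -/
open SimpleGraph

/-!
The vertices of a part may come from several disjoint `C₆`-free graphs: since `C₆` is connected,
the disjoint union stays `C₆`-free, and each graph can take care of some of the pairs of parts.

For `q` prime, index the parts by `v ∈ 𝔽_q²`. In `𝔽_q³`, the incidence graph of points and of lines
with directions `(1, x, x²)` has no 6-cycle: it would give a triangle whose sides have three
distinct such directions, which are linearly independent by Vandermonde. The part of `v` contains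
the lines through `(0, v)` and the points `(a, v)` with `a ∈ S`, where `S` contains one of `x` and
`-x` for every `x ≠ 0`. If `u` and `v` differ in both coordinates, then for some `a ≠ 0` the point
`(a, u)` lies on a line of the part of `v` and `(-a, v)` on one of the part of `u`, so `3q/2`
vertices per part suffice. Pairs that agree in one coordinate are handled by copies of a graph with
`q` parts, whose parts need only `O(√q)` vertices, by the same construction applied to a prime of
Bertrand's postulate.

Hence `f(r, C₆) ≤ (3/2 + o(1)) q` for every prime `q ≥ √r`, and Chebyshev's bounds for `ψ` give
such a prime with `q ≤ (6/5 + o(1)) √r`, which yields the constant `9/5`.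
-/

section FreeCover

variable {W : Type*} {H : SimpleGraph W} {I J : Type} {R R' : SimpleGraph I} {k k' : ℕ}

/-- Some finite `H`-free graph has pairwise disjoint parts `P i`, each of size at most `k`, with an
edge between `P i` and `P j` whenever `R.Adj i j`. For `R = ⊤` on `Fin r` the parts induce an
`H`-free `(r,k)`-graph; a general `R` allows this graph to be assembled from pieces. The parts need
not exhaust the vertices. -/
def HasFreeCover (H : SimpleGraph W) (R : SimpleGraph I) (k : ℕ) : Prop :=
  ∃ (V : Type) (_ : Finite V) (G : SimpleGraph V) (P : I → Set V),
    H.Free G ∧ Pairwise (Function.onFun Disjoint P) ∧ (∀ i, (P i).ncard ≤ k) ∧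
      ∀ i j, R.Adj i j → ∃ u ∈ P i, ∃ w ∈ P j, G.Adj u w

namespace HasFreeCover

theorem mono (h : HasFreeCover H R k) (hR : R' ≤ R) (hk : k ≤ k') : HasFreeCover H R' k' :=
  let ⟨V, hV, G, P, hfree, hdisj, hcard, hedge⟩ := h
  ⟨V, hV, G, P, hfree, hdisj, fun i ↦ (hcard i).trans hk, fun i j hij ↦ hedge i j (hR hij)⟩

theorem comap (h : HasFreeCover H R k) {f : J → I} (hf : Function.Injective f) :
    HasFreeCover H (R.comap f) k :=
  let ⟨V, hV, G, P, hfree, hdisj, hcard, hedge⟩ := h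
  ⟨V, hV, G, P ∘ f, hfree, hdisj.comp_of_injective hf, fun i ↦ hcard (f i),
    fun i j ↦ hedge (f i) (f j)⟩

theorem top_of_card_le [Finite I] [Finite J] (h : HasFreeCover H (⊤ : SimpleGraph J) k)
    (hIJ : Nat.card I ≤ Nat.card J) : HasFreeCover H (⊤ : SimpleGraph I) k := by
  have := Fintype.ofFinite I
  have := Fintype.ofFinite J
  obtain ⟨f⟩ := Function.Embedding.nonempty_of_card_le (by simpa using hIJ)
  exact (h.comap f.injective).mono (fun i j hij ↦ f.injective.ne hij) le_rfl

end HasFreeCover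

theorem apply_eq_of_preconnected {V ι : Type*} {G : SimpleGraph V} (hH : H.Preconnected)
    (f : H →g G) {π : V → ι} (hπ : ∀ u v, G.Adj u v → π u = π v) (a b : W) :
    π (f a) = π (f b) := by
  obtain ⟨p⟩ := hH a b
  induction p with
  | nil => rfl
  | cons hadj _ ih => exact (hπ _ _ (f.map_adj hadj)).trans ih

theorem free_of_free_induce_fibers {V ι : Type*} {G : SimpleGraph V} (hH : H.Connected)
    (π : V → ι) (hπ : ∀ u v, G.Adj u v → π u = π v)
    (hfree : ∀ i, H.Free (G.induce (π ⁻¹' {i}))) : H.Free G := by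
  rintro ⟨f⟩
  obtain ⟨a⟩ := hH.nonempty
  have hfiber (b : W) : f b ∈ π ⁻¹' {π (f a)} :=
    apply_eq_of_preconnected hH.preconnected f.toHom hπ b a
  exact hfree _ ⟨⟨⟨fun b ↦ ⟨f b, hfiber b⟩, fun hadj ↦ f.toHom.map_adj hadj⟩,
    fun b c hbc ↦ f.injective (congrArg Subtype.val hbc)⟩⟩

theorem free_sum {V V' : Type*} {G : SimpleGraph V} {G' : SimpleGraph V'} (hH : H.Connected)
    (hG : H.Free G) (hG' : H.Free G') : H.Free (G ⊕g G') := by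
  refine free_of_free_induce_fibers hH Sum.isLeft (by rintro (u | u) (v | v) <;> simp) ?_
  rintro (_ | _)
  · have hinr : Sum.isLeft ⁻¹' {false} = Set.range (Embedding.sumInr : G' ↪g G ⊕g G') := by
      ext (v | v) <;> simp
    rw [hinr]
    exact hG'.congr_right Embedding.sumInr.isoInduceRange.symm
  · have hinl : Sum.isLeft ⁻¹' {true} = Set.range (Embedding.sumInl : G ↪g G ⊕g G') := by
      ext (v | v) <;> simp
    rw [hinl]
    exact hG.congr_right Embedding.sumInl.isoInduceRange.symm

theorem free_bot_boxProd {V V' : Type*} {G' : SimpleGraph V'} (hH : H.Connected)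
    (hG' : H.Free G') : H.Free ((⊥ : SimpleGraph V) □ G') := by
  refine free_of_free_induce_fibers hH Prod.fst (by rintro ⟨a, u⟩ ⟨b, v⟩; simp) fun a ↦ ?_
  have hfiber : Prod.fst ⁻¹' {a} = Set.range (boxProdRight (⊥ : SimpleGraph V) G' a) := by
    ext ⟨b, v⟩
    simp [eq_comm]
  rw [hfiber]
  exact hG'.congr_right (boxProdRight (⊥ : SimpleGraph V) G' a).isoInduceRange.symm

namespace HasFreeCover

theorem sup (hH : H.Connected) (h : HasFreeCover H R k) (h' : HasFreeCover H R' k') :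
    HasFreeCover H (R ⊔ R') (k + k') := by
  obtain ⟨V, hV, G, P, hfree, hdisj, hcard, hedge⟩ := h
  obtain ⟨V', hV', G', P', hfree', hdisj', hcard', hedge'⟩ := h'
  refine ⟨V ⊕ V', inferInstance, G ⊕g G', fun i ↦ Sum.inl '' P i ∪ Sum.inr '' P' i,
    free_sum hH hfree hfree', fun i j hij ↦ ?_, fun i ↦ ?_, ?_⟩
  · simp only [Function.onFun, Set.disjoint_union_left, Set.disjoint_union_right]
    exact ⟨⟨(Set.disjoint_image_iff Sum.inl_injective).2 (hdisj hij),
      Set.disjoint_image_inl_image_inr.symm⟩, Set.disjoint_image_inl_image_inr,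
      (Set.disjoint_image_iff Sum.inr_injective).2 (hdisj' hij)⟩
  · calc
      _ ≤ (Sum.inl '' P i).ncard + (Sum.inr '' P' i).ncard := Set.ncard_union_le _ _
      _ = (P i).ncard + (P' i).ncard := by
        rw [Set.ncard_image_of_injective _ Sum.inl_injective,
          Set.ncard_image_of_injective _ Sum.inr_injective]
      _ ≤ k + k' := add_le_add (hcard i) (hcard' i)
  · rintro i j (hij | hij)
    · obtain ⟨u, hu, w, hw, huw⟩ := hedge i j hij
      exact ⟨.inl u, .inl ⟨u, hu, rfl⟩, .inl w, .inl ⟨w, hw, rfl⟩, huw⟩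
    · obtain ⟨u, hu, w, hw, huw⟩ := hedge' i j hij
      exact ⟨.inr u, .inr ⟨u, hu, rfl⟩, .inr w, .inr ⟨w, hw, rfl⟩, huw⟩

theorem bot_boxProd [Finite J] (hH : H.Connected) (h : HasFreeCover H R k) :
    HasFreeCover H ((⊥ : SimpleGraph J) □ R) k := by
  obtain ⟨V, hV, G, P, hfree, hdisj, hcard, hedge⟩ := h
  refine ⟨J × V, inferInstance, ⊥ □ G, fun x ↦ {x.1} ×ˢ P x.2, free_bot_boxProd hH hfree,
    fun x y hxy ↦ ?_, fun x ↦ ?_, ?_⟩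
  · rw [Function.onFun, Set.disjoint_prod, Set.disjoint_singleton, or_iff_not_imp_left, not_ne_iff]
    exact fun hfst ↦ hdisj fun hsnd ↦ hxy (Prod.ext hfst hsnd)
  · simpa [Set.ncard_prod] using hcard x.2
  · rintro ⟨a, i⟩ ⟨b, j⟩ (⟨hab, -⟩ | ⟨hij, rfl⟩)
    · exact hab.elim
    · obtain ⟨u, hu, w, hw, huw⟩ := hedge i j hij
      exact ⟨(a, u), ⟨rfl, hu⟩, (a, w), ⟨rfl, hw⟩, boxProd_adj_right.2 huw⟩

theorem boxProd [Finite I] [Finite J] {R' : SimpleGraph J} (hH : H.Connected)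
    (h : HasFreeCover H R k) (h' : HasFreeCover H R' k') : HasFreeCover H (R □ R') (k + k') := by
  refine (((h.bot_boxProd hH).comap Prod.swap_injective).sup hH (h'.bot_boxProd hH)).mono ?_ le_rfl
  rintro ⟨i, i'⟩ ⟨j, j'⟩ (hij | hij)
  · exact Or.inl (Or.inr hij)
  · exact Or.inr (Or.inr hij)

theorem top_card [Finite I] {u v w : W} (huv : H.Adj u v) (hwv : H.Adj w v) (huw : u ≠ w) :
    HasFreeCover H (⊤ : SimpleGraph I) (Nat.card I) := by
  refine ⟨I × I, inferInstance, fromRel fun x y ↦ x.swap = y, fun i ↦ {i} ×ˢ Set.univ, ?_,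
    fun i j hij ↦ ?_, fun i ↦ ?_, fun i j hij ↦ ?_⟩
  · rintro ⟨f⟩
    have hswap {a b : W} (hab : H.Adj a b) : f a = (f b).swap := by
      obtain ⟨-, h | h⟩ := f.toHom.map_adj hab
      · exact Prod.swap_injective (h.trans (Prod.swap_swap _).symm)
      · exact h.symm
    exact huw (f.injective ((hswap huv).trans (hswap hwv).symm))
  · simp [Function.onFun, Set.disjoint_prod, hij]
  · simp [Set.ncard_prod, Set.ncard_univ]
  · exact ⟨(i, j), by simp, (j, i), by simp, ⟨fun h ↦ hij (congrArg Prod.fst h), Or.inl rfl⟩⟩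

end HasFreeCover

theorem fGraph_le_of_hasFreeCover {W : Type} {H : SimpleGraph W} {r k : ℕ}
    (h : HasFreeCover H (⊤ : SimpleGraph (Fin r)) k) : fGraph H r ≤ k := by
  classical
  obtain ⟨V, hV, G, P, hfree, hdisj, hcard, hedge⟩ := h
  obtain ⟨n, ⟨e⟩⟩ := Finite.exists_equiv_fin (⋃ i, P i)
  let val : Fin n → V := fun v ↦ e.symm v
  have hval : Function.Injective val := Subtype.val_injective.comp e.symm.injective
  have hmem {i : Fin r} {u : V} (hu : u ∈ P i) : ∃ v, val v = u :=
    ⟨e ⟨u, Set.mem_iUnion_of_mem i hu⟩, by simp [val]⟩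
  refine Nat.sInf_le ⟨n, G.comap val, fun ⟨f, hf⟩ ↦ hfree ?_,
    fun i ↦ {v | val v ∈ P i}, fun v ↦ ?_, fun i ↦ ?_, fun i j hij ↦ ?_⟩
  · exact ⟨⟨⟨val ∘ f, f.map_adj⟩, hval.comp hf⟩⟩
  · obtain ⟨i, hi⟩ := Set.mem_iUnion.1 (e.symm v).2
    refine ⟨i, by simpa using hi, fun j hj ↦ ?_⟩
    by_contra hji
    exact Set.disjoint_left.1 (hdisj hji) (by simpa using hj) hi
  · calc
      _ = (val ⁻¹' P i).ncard := by rw [← Set.ncard_coe_finset]; congr; ext; simp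
      _ = (P i).ncard :=
        Set.ncard_preimage_of_injective_subset_range hval (fun u hu ↦ hmem hu)
      _ ≤ k := hcard i
  · obtain ⟨u, hu, w, hw, huw⟩ := hedge i j hij
    obtain ⟨⟨u, rfl⟩, ⟨w, rfl⟩⟩ := hmem hu, hmem hw
    exact ⟨u, by simpa using hu, w, by simpa using hw, huw⟩

end FreeCover

section Wenger

/-- The bipartite graph on `α ⊕ β` in which `a : α` and `b : β` are adjacent when `r a b`: the
point–line incidence graph, when `r` is the incidence relation. -/
def incidenceGraph {α β : Type*} (r : α → β → Prop) : SimpleGraph (α ⊕ β) where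
  Adj
    | .inl a, .inr b => r a b
    | .inr b, .inl a => r a b
    | _, _ => False
  symm := ⟨by rintro (a | b) (a' | b') h <;> exact h⟩
  loopless := ⟨by rintro (a | b) h <;> exact h⟩

section IncidenceGraph

variable {α β : Type*} {r : α → β → Prop}

theorem incidenceGraph_adj_inl {a : α} {y : α ⊕ β} :
    (incidenceGraph r).Adj (.inl a) y ↔ ∃ b, y = .inr b ∧ r a b := by
  rcases y with a' | b <;> simp [incidenceGraph]

theorem incidenceGraph_adj_inr {b : β} {y : α ⊕ β} :
    (incidenceGraph r).Adj (.inr b) y ↔ ∃ a, y = .inl a ∧ r a b := by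
  rcases y with a | b' <;> simp [incidenceGraph]

theorem exists_hexagon_of_apply_zero_eq_inl {g : Fin 6 → α ⊕ β} (hg : Function.Injective g)
    (hadj : ∀ i, (incidenceGraph r).Adj (g i) (g (i + 1))) {a : α} (ha : g 0 = .inl a) :
    ∃ (p : Fin 3 → α) (l : Fin 3 → β), Function.Injective p ∧ Function.Injective l ∧
      ∀ i, r (p i) (l i) ∧ r (p (i + 1)) (l i) := by
  have hpoint {i : Fin 6} {a : α} (h : g i = .inl a) : ∃ b, g (i + 1) = .inr b ∧ r a b :=
    incidenceGraph_adj_inl.1 (h ▸ hadj i)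
  have hline {i : Fin 6} {b : β} (h : g i = .inr b) : ∃ a, g (i + 1) = .inl a ∧ r a b :=
    incidenceGraph_adj_inr.1 (h ▸ hadj i)
  obtain ⟨b₀, hb₀, h₀₀⟩ := hpoint ha
  obtain ⟨a₁, ha₁, h₁₀⟩ := hline hb₀
  obtain ⟨b₁, hb₁, h₁₁⟩ := hpoint ha₁
  obtain ⟨a₂, ha₂, h₂₁⟩ := hline hb₁
  obtain ⟨b₂, hb₂, h₂₂⟩ := hpoint ha₂
  obtain ⟨a₃, ha₃, h₃₂⟩ := hline hb₂
  obtain rfl : a₃ = a := Sum.inl_injective (ha₃.symm.trans ha)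
  have hp : Sum.inl ∘ ![a₃, a₁, a₂] = g ∘ ![0, 2, 4] := by
    ext1 i
    fin_cases i <;> [exact ha.symm; exact ha₁.symm; exact ha₂.symm]
  have hl : Sum.inr ∘ ![b₀, b₁, b₂] = g ∘ ![1, 3, 5] := by
    ext1 i
    fin_cases i <;> [exact hb₀.symm; exact hb₁.symm; exact hb₂.symm]
  refine ⟨![a₃, a₁, a₂], ![b₀, b₁, b₂], .of_comp (f := Sum.inl (β := β)) ?_,
    .of_comp (f := Sum.inr (α := α)) ?_, fun i ↦ ?_⟩
  · exact hp ▸ hg.comp (by decide)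
  · exact hl ▸ hg.comp (by decide)
  · fin_cases i <;> [exact ⟨h₀₀, h₁₀⟩; exact ⟨h₁₁, h₂₁⟩; exact ⟨h₂₂, h₃₂⟩]

theorem cycleGraph_six_free_incidenceGraph
    (hr : ∀ (p : Fin 3 → α) (l : Fin 3 → β), Function.Injective p → Function.Injective l →
      ¬ ∀ i, r (p i) (l i) ∧ r (p (i + 1)) (l i)) :
    (cycleGraph 6).Free (incidenceGraph r) := by
  rintro ⟨f⟩
  have hadj (i : Fin 6) : (incidenceGraph r).Adj (f i) (f (i + 1)) :=
    f.toHom.map_adj ((by decide : ∀ i : Fin 6, (cycleGraph 6).Adj i (i + 1)) i)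
  suffices h : ∃ g : Fin 6 → α ⊕ β, Function.Injective g ∧
      (∀ i, (incidenceGraph r).Adj (g i) (g (i + 1))) ∧ ∃ a, g 0 = .inl a by
    obtain ⟨g, hg, hgadj, a, ha⟩ := h
    obtain ⟨p, l, hp, hl, hpl⟩ := exists_hexagon_of_apply_zero_eq_inl hg hgadj ha
    exact hr p l hp hl hpl
  rcases h₀ : f 0 with a | b
  · exact ⟨f, f.injective, hadj, a, h₀⟩
  · obtain ⟨a, ha, -⟩ := incidenceGraph_adj_inr.1 (h₀ ▸ hadj 0)
    exact ⟨fun i ↦ f (i + 1), f.injective.comp (add_left_injective 1), fun i ↦ hadj (i + 1), a, ha⟩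

end IncidenceGraph

variable {F : Type} [Field F]

/-- The incidence relation of the Wenger graph `W₂(F)`, up to a change of coordinates. The triple
`(x, w)` stands for the line through `(0, w)` with direction `(1, x, x ^ 2)`. -/
def WengerIncidence (p l : F × F × F) : Prop :=
  p.2 = l.2 + p.1 • (l.1, l.1 ^ 2)

namespace WengerIncidence

theorem point_eq {p p' l : F × F × F} (h : WengerIncidence p l) (h' : WengerIncidence p' l)
    (hp : p.1 = p'.1) : p = p' :=
  Prod.ext hp (by rw [h, h', hp])

theorem line_eq {p l l' : F × F × F} (h : WengerIncidence p l) (h' : WengerIncidence p l')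
    (hl : l.1 = l'.1) : l = l' :=
  Prod.ext hl (add_right_cancel (h.symm.trans (hl ▸ h')))

theorem sub_eq {p p' l : F × F × F} (h : WengerIncidence p l) (h' : WengerIncidence p' l) :
    p.2 - p'.2 = (p.1 - p'.1) • (l.1, l.1 ^ 2) := by
  rw [h, h', add_sub_add_left_eq_sub, sub_smul]

theorem not_hexagon {p l : Fin 3 → F × F × F} (hp : Function.Injective p)
    (hl : Function.Injective l) :
    ¬ ∀ i, WengerIncidence (p i) (l i) ∧ WengerIncidence (p (i + 1)) (l i) := by
  intro h
  have h₀ : WengerIncidence (p 0) (l 0) ∧ WengerIncidence (p 1) (l 0) := h 0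
  have h₁ : WengerIncidence (p 1) (l 1) ∧ WengerIncidence (p 2) (l 1) := h 1
  have h₂ : WengerIncidence (p 2) (l 2) ∧ WengerIncidence (p 0) (l 2) := h 2
  have h₀₁ : (l 0).1 ≠ (l 1).1 := fun hx ↦ hl.ne (by decide) (h₀.2.line_eq h₁.1 hx)
  have h₀₂ : (l 0).1 ≠ (l 2).1 := fun hx ↦ hl.ne (by decide) (h₀.1.line_eq h₂.2 hx)
  have hsum : ((p 0).1 - (p 1).1) • ((l 0).1, (l 0).1 ^ 2) +
      ((p 1).1 - (p 2).1) • ((l 1).1, (l 1).1 ^ 2) +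
      ((p 2).1 - (p 0).1) • ((l 2).1, (l 2).1 ^ 2) = 0 := by
    rw [← h₀.1.sub_eq h₀.2, ← h₁.1.sub_eq h₁.2, ← h₂.1.sub_eq h₂.2]
    abel
  simp only [Prod.smul_mk, Prod.mk_add_mk, Prod.mk_eq_zero, smul_eq_mul] at hsum
  have helim : ((p 0).1 - (p 1).1) * (((l 0).1 - (l 1).1) * ((l 0).1 - (l 2).1)) = 0 := by
    linear_combination hsum.2 - ((l 1).1 + (l 2).1) * hsum.1
  have hdir : (p 0).1 = (p 1).1 := sub_eq_zero.1 <| (mul_eq_zero.1 helim).resolve_right <|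
    mul_ne_zero (sub_ne_zero.2 h₀₁) (sub_ne_zero.2 h₀₂)
  exact hp.ne (by decide) (h₀.1.point_eq h₀.2 hdir)

end WengerIncidence

theorem exists_wengerIncidence {u v : F × F} (h₁ : u.1 ≠ v.1) (h₂ : u.2 ≠ v.2) :
    ∃ a x : F, a ≠ 0 ∧ WengerIncidence (a, u) (x, v) ∧ WengerIncidence (-a, v) (x, u) := by
  have h₁' : u.1 - v.1 ≠ 0 := sub_ne_zero.2 h₁
  have h₂' : u.2 - v.2 ≠ 0 := sub_ne_zero.2 h₂
  refine ⟨(u.1 - v.1) ^ 2 / (u.2 - v.2), (u.2 - v.2) / (u.1 - v.1), by positivity, ?_, ?_⟩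
  all_goals
    refine Prod.ext ?_ ?_
    all_goals
      simp only [Prod.smul_mk, Prod.fst_add, Prod.snd_add, smul_eq_mul]
      field_simp
      ring

-- `(⊤ □ ⊤)ᶜ` joins the pairs that differ in both coordinates.
theorem hasFreeCover_wenger [Finite F] {S : Set F} (hS : ∀ x ≠ 0, x ∈ S ∨ -x ∈ S) :
    HasFreeCover (cycleGraph 6) ((⊤ □ ⊤ : SimpleGraph (F × F))ᶜ) (S.ncard + Nat.card F) := by
  refine ⟨(F × F × F) ⊕ (F × F × F), inferInstance, incidenceGraph WengerIncidence,
    fun v ↦ Sum.inl '' (S ×ˢ {v}) ∪ Sum.inr '' (Set.univ ×ˢ {v}),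
    cycleGraph_six_free_incidenceGraph fun p l hp hl ↦ WengerIncidence.not_hexagon hp hl,
    fun u v huv ↦ ?_, fun v ↦ ?_, fun u v huv ↦ ?_⟩
  · have hdisj (A B : Set F) : Disjoint (A ×ˢ {u}) (B ×ˢ {v}) :=
      Set.disjoint_prod.2 (.inr (Set.disjoint_singleton.2 huv))
    simp only [Function.onFun, Set.disjoint_union_left, Set.disjoint_union_right]
    exact ⟨⟨(Set.disjoint_image_iff Sum.inl_injective).2 (hdisj _ _),
      Set.disjoint_image_inl_image_inr.symm⟩, Set.disjoint_image_inl_image_inr,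
      (Set.disjoint_image_iff Sum.inr_injective).2 (hdisj _ _)⟩
  · refine (Set.ncard_union_le _ _).trans_eq ?_
    rw [Set.ncard_image_of_injective _ Sum.inl_injective,
      Set.ncard_image_of_injective _ Sum.inr_injective]
    simp [Set.ncard_prod, Set.ncard_univ]
  · have hdiff : u.1 ≠ v.1 ∧ u.2 ≠ v.2 := by
      simp only [compl_adj, boxProd_adj, top_adj] at huv
      grind
    obtain ⟨a, x, ha, huv, hvu⟩ := exists_wengerIncidence hdiff.1 hdiff.2
    rcases hS a ha with haS | haS
    · exact ⟨.inl (a, u), by simpa using haS, .inr (x, v), by simp, huv⟩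
    · exact ⟨.inr (x, u), by simp, .inl (-a, v), by simpa using haS, hvu⟩

theorem exists_half_system (n : ℕ) [NeZero n] :
    ∃ S : Set (ZMod n), S.ncard ≤ n / 2 ∧ ∀ x ≠ 0, x ∈ S ∨ -x ∈ S := by
  refine ⟨Nat.cast '' (Finset.Icc 1 (n / 2) : Set ℕ), ?_, fun x hx ↦ ?_⟩
  · refine (Set.ncard_image_le (Finset.finite_toSet _)).trans_eq ?_
    rw [Set.ncard_coe_finset, Nat.card_Icc, Nat.add_sub_cancel]
  · have hmem : x.valMinAbs.natAbs ∈ (Finset.Icc 1 (n / 2) : Set ℕ) := by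
      have hle := ZMod.natAbs_valMinAbs_le x
      have hne : x.valMinAbs.natAbs ≠ 0 := by simpa using hx
      exact Finset.mem_coe.2 (Finset.mem_Icc.2 ⟨Nat.one_le_iff_ne_zero.2 hne, hle⟩)
    have hcast := ZMod.natCast_natAbs_valMinAbs x
    split_ifs at hcast
    · exact .inl ⟨_, hmem, hcast⟩
    · exact .inr ⟨_, hmem, hcast⟩

theorem hasFreeCover_sq {q m : ℕ} (hq : q.Prime)
    (h : HasFreeCover (cycleGraph 6) (⊤ : SimpleGraph (ZMod q)) m) :
    HasFreeCover (cycleGraph 6) (⊤ : SimpleGraph (ZMod q × ZMod q)) (q / 2 + q + 2 * m) := by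
  have : Fact q.Prime := ⟨hq⟩
  obtain ⟨S, hcard, hS⟩ := exists_half_system q
  have hconn : (cycleGraph 6).Connected := cycleGraph_connected
  refine ((hasFreeCover_wenger hS).sup hconn (h.boxProd hconn h)).mono ?_ ?_
  · rw [compl_sup_eq_top]
  · rw [Nat.card_zmod]
    omega

theorem hasFreeCover_of_card_le_sq {q m : ℕ} {I : Type} [Finite I] (hq : q.Prime)
    (h : HasFreeCover (cycleGraph 6) (⊤ : SimpleGraph (ZMod q)) m) (hI : Nat.card I ≤ q ^ 2) :
    HasFreeCover (cycleGraph 6) (⊤ : SimpleGraph I) (q / 2 + q + 2 * m) := by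
  have : NeZero q := ⟨hq.ne_zero⟩
  exact (hasFreeCover_sq hq h).top_of_card_le (by simpa [sq] using hI)

theorem hasFreeCover_sqrt (I : Type) [Finite I] :
    HasFreeCover (cycleGraph 6) (⊤ : SimpleGraph I) (7 * ((Nat.card I).sqrt + 1)) := by
  obtain ⟨p, hp, hlt, hle⟩ := Nat.exists_prime_lt_and_le_two_mul ((Nat.card I).sqrt + 1) (by simp)
  have : NeZero p := ⟨hp.ne_zero⟩
  have hbase : HasFreeCover (cycleGraph 6) (⊤ : SimpleGraph (ZMod p)) (Nat.card (ZMod p)) :=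
    .top_card (u := 0) (v := 1) (w := 2) (by decide) (by decide) (by decide)
  refine (hasFreeCover_of_card_le_sq hp hbase ?_).mono le_rfl ?_
  · exact (Nat.sqrt_lt'.1 ((Nat.lt_succ_self _).trans hlt)).le
  · rw [Nat.card_zmod]
    omega

theorem fGraph_cycleGraph_six_le {r q : ℕ} (hq : q.Prime) (hr : r ≤ q ^ 2) :
    fGraph (cycleGraph 6) r ≤ q / 2 + q + 14 * (q.sqrt + 1) := by
  have : NeZero q := ⟨hq.ne_zero⟩
  have h := hasFreeCover_of_card_le_sq (I := Fin r) hq (hasFreeCover_sqrt (ZMod q)) (by simpa)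
  rw [Nat.card_zmod, ← mul_assoc] at h
  exact fGraph_le_of_hasFreeCover h

end Wenger

section PrimeGaps

open Asymptotics Chebyshev Filter Finset Topology
open scoped ArithmeticFunction.vonMangoldt ArithmeticFunction.zeta Nat

theorem log_factorial_eq_sum_vonMangoldt {N M : ℕ} (hNM : N ≤ M) :
    Real.log (N ! : ℝ) = ∑ n ∈ Ioc 0 M, Λ n * (N / n : ℕ) := by
  calc
    _ = ∑ n ∈ Ioc 0 N, Real.log n := by
      rw [← prod_Ico_id_eq_factorial, Nat.cast_prod,
        Real.log_prod fun n hn ↦ Nat.cast_ne_zero.2 (by grind)]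
      rfl
    _ = ∑ n ∈ Ioc 0 N, (Λ * ζ) n := by
      simp only [ArithmeticFunction.vonMangoldt_mul_zeta, ArithmeticFunction.log_apply]
    _ = ∑ n ∈ Ioc 0 N, Λ n * (N / n : ℕ) := ArithmeticFunction.sum_Ioc_mul_zeta_eq_sum _ _
    _ = ∑ n ∈ Ioc 0 M, Λ n * (N / n : ℕ) := by
      refine sum_subset (Ioc_subset_Ioc_right hNM) fun n hn hnN ↦ ?_
      rw [Nat.div_eq_of_lt (by grind), Nat.cast_zero, mul_zero]

/-- The logarithm of `⌊x⌋!`, Chebyshev's function `T`. -/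
noncomputable def logFactorial (x : ℝ) : ℝ := Real.log (⌊x⌋₊ ! : ℝ)

/-- Chebyshev's combination of log-factorials: it differs little from `ψ`, and the coefficients are
chosen so that the terms `x log x` of Stirling's formula cancel. -/
noncomputable def chebyshevCombination (x : ℝ) : ℝ :=
  logFactorial x - logFactorial (x / 2) - logFactorial (x / 3) - logFactorial (x / 5) +
    logFactorial (x / 30)

/-- The coefficient of `Λ n` in `chebyshevCombination x`, as a function of `m = ⌊x / n⌋`. -/
def chebyshevWeight (m : ℕ) : ℤ :=
  m - (m / 2 : ℕ) - (m / 3 : ℕ) - (m / 5 : ℕ) + (m / 30 : ℕ)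

theorem chebyshevCombination_eq_sum (x : ℝ) :
    chebyshevCombination x = ∑ n ∈ Ioc 0 ⌊x⌋₊, Λ n * chebyshevWeight (⌊x⌋₊ / n) := by
  have hdiv (d : ℕ) :
      Real.log ((⌊x⌋₊ / d)! : ℝ) = ∑ n ∈ Ioc 0 ⌊x⌋₊, Λ n * (⌊x⌋₊ / n / d : ℕ) := by
    rw [log_factorial_eq_sum_vonMangoldt (Nat.div_le_self _ d)]
    simp_rw [Nat.div_right_comm]
  simp only [chebyshevCombination, logFactorial, Nat.floor_div_ofNat, hdiv,
    log_factorial_eq_sum_vonMangoldt le_rfl, ← sum_sub_distrib, ← sum_add_distrib, chebyshevWeight]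
  refine sum_congr rfl fun n _ ↦ ?_
  simp only [Int.cast_add, Int.cast_sub, Int.cast_natCast]
  ring

theorem chebyshevWeight_nonneg (m : ℕ) : 0 ≤ chebyshevWeight m := by
  unfold chebyshevWeight
  omega

theorem chebyshevWeight_le_one (m : ℕ) : chebyshevWeight m ≤ 1 := by
  unfold chebyshevWeight
  omega

theorem one_le_chebyshevWeight {m : ℕ} (hm : 0 < m) (hm6 : m < 6) : 1 ≤ chebyshevWeight m := by
  unfold chebyshevWeight
  omega

theorem chebyshevCombination_le_psi (x : ℝ) : chebyshevCombination x ≤ ψ x := by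
  rw [chebyshevCombination_eq_sum, psi]
  refine sum_le_sum fun n _ ↦ mul_le_of_le_one_right ArithmeticFunction.vonMangoldt_nonneg ?_
  exact_mod_cast chebyshevWeight_le_one _

theorem psi_le_psi_div_six_add_chebyshevCombination (x : ℝ) :
    ψ x ≤ ψ (x / 6) + chebyshevCombination x := by
  calc
    ψ x = ψ (x / 6) + ∑ n ∈ Ioc (⌊x⌋₊ / 6) ⌊x⌋₊, Λ n := by
      rw [psi, psi, Nat.floor_div_ofNat,
        sum_Ioc_consecutive _ (Nat.zero_le _) (Nat.div_le_self _ _)]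
    _ ≤ ψ (x / 6) + ∑ n ∈ Ioc (⌊x⌋₊ / 6) ⌊x⌋₊, Λ n * chebyshevWeight (⌊x⌋₊ / n) := by
      gcongr with n hn
      obtain ⟨hlt, hle⟩ := mem_Ioc.1 hn
      have hn0 : 0 < n := by omega
      have hweight : 1 ≤ chebyshevWeight (⌊x⌋₊ / n) :=
        one_le_chebyshevWeight (Nat.div_pos hle hn0) ((Nat.div_lt_iff_lt_mul hn0).2 (by omega))
      exact le_mul_of_one_le_right ArithmeticFunction.vonMangoldt_nonneg (mod_cast hweight)
    _ ≤ ψ (x / 6) + chebyshevCombination x := by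
      rw [chebyshevCombination_eq_sum]
      gcongr
      · exact fun n _ _ ↦ mul_nonneg ArithmeticFunction.vonMangoldt_nonneg
          (mod_cast chebyshevWeight_nonneg _)
      · exact Nat.zero_le _

theorem log_factorial_sub_isLittleO :
    (fun n : ℕ ↦ Real.log (n ! : ℝ) - (n * Real.log n - n)) =o[atTop] fun n : ℕ ↦ (n : ℝ) := by
  have hseq : (fun n : ℕ ↦ Real.log (Stirling.stirlingSeq n)) =o[atTop] fun n : ℕ ↦ (n : ℝ) := by
    have hlim := Stirling.tendsto_stirlingSeq_sqrt_pi.log (by positivity)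
    exact hlim.isBigO_one ℝ |>.trans_isLittleO
      ((isLittleO_const_id_atTop (1 : ℝ)).comp_tendsto tendsto_natCast_atTop_atTop)
  have hlog : (fun n : ℕ ↦ Real.log (2 * n)) =o[atTop] fun n : ℕ ↦ (n : ℝ) := by
    have htop : Tendsto (fun n : ℕ ↦ (2 * n : ℝ)) atTop atTop :=
      tendsto_natCast_atTop_atTop.const_mul_atTop two_pos
    exact (Real.isLittleO_log_id_atTop.comp_tendsto htop).trans_isBigO
      (isBigO_const_mul_self 2 _ _)
  refine (hseq.add (hlog.const_mul_left (1 / 2))).congr' ?_ .rfl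
  filter_upwards [eventually_ne_atTop 0] with n hn
  rw [Stirling.log_stirlingSeq_formula, Real.log_div (by positivity) (by positivity), Real.log_exp]
  ring

theorem mul_log_sub_self_sub_le {x y : ℝ} (hx : 0 < x) (hy : 0 < y) :
    (x * Real.log x - x) - (y * Real.log y - y) ≤ (x - y) * Real.log x := by
  have h := Real.log_le_sub_one_of_pos (div_pos hx hy)
  rw [Real.log_div hx.ne' hy.ne', ← mul_le_mul_iff_right₀ hy, mul_sub, mul_sub,
    mul_div_cancel₀ _ hy.ne'] at h
  linarith

theorem logFactorial_sub_isLittleO :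
    (fun x ↦ logFactorial x - (x * Real.log x - x)) =o[atTop] fun x : ℝ ↦ x := by
  have hfloor : (fun x : ℝ ↦ (⌊x⌋₊ : ℝ)) =O[atTop] fun x ↦ x :=
    isEquivalent_nat_floor.isBigO
  have hfactorial : (fun x : ℝ ↦ logFactorial x - (⌊x⌋₊ * Real.log ⌊x⌋₊ - ⌊x⌋₊))
      =o[atTop] fun x ↦ x :=
    (log_factorial_sub_isLittleO.comp_tendsto tendsto_nat_floor_atTop).trans_isBigO hfloor
  have hstep : (fun x : ℝ ↦ (⌊x⌋₊ * Real.log ⌊x⌋₊ - ⌊x⌋₊) - (x * Real.log x - x))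
      =o[atTop] fun x ↦ x := by
    refine IsBigO.trans_isLittleO (.of_bound' ?_) Real.isLittleO_log_id_atTop
    filter_upwards [eventually_ge_atTop 1] with x hx
    have hn : 1 ≤ (⌊x⌋₊ : ℝ) := mod_cast (Nat.one_le_floor_iff x).2 hx
    have hle : (⌊x⌋₊ : ℝ) ≤ x := Nat.floor_le (by linarith)
    have hlt : x < ⌊x⌋₊ + 1 := Nat.lt_floor_add_one x
    have hlogx : 0 ≤ Real.log x := Real.log_nonneg hx
    have hupper := mul_log_sub_self_sub_le (x := x) (y := ⌊x⌋₊) (by linarith) (by linarith)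
    have hlower := mul_log_sub_self_sub_le (x := ⌊x⌋₊) (y := x) (by linarith) (by linarith)
    rw [Real.norm_eq_abs, Real.norm_of_nonneg hlogx, abs_le]
    constructor
    · nlinarith
    · nlinarith [Real.log_nonneg hn]
  simpa using hfactorial.add hstep

/-- Chebyshev's constant, the density of `chebyshevCombination`. -/
noncomputable def chebyshevConstant : ℝ :=
  Real.log 2 / 2 + Real.log 3 / 3 + Real.log 5 / 5 - Real.log 30 / 30

theorem chebyshevConstant_pos : 0 < chebyshevConstant := by
  have h30 : Real.log 30 = Real.log 2 + Real.log 3 + Real.log 5 := by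
    rw [← Real.log_mul (by norm_num) (by norm_num), ← Real.log_mul (by norm_num) (by norm_num)]
    norm_num
  have h2 : 0 < Real.log 2 := Real.log_pos (by norm_num)
  have h3 : 0 < Real.log 3 := Real.log_pos (by norm_num)
  have h5 : 0 < Real.log 5 := Real.log_pos (by norm_num)
  unfold chebyshevConstant
  linarith

theorem chebyshevCombination_sub_isLittleO :
    (fun x ↦ chebyshevCombination x - chebyshevConstant * x) =o[atTop] fun x : ℝ ↦ x := by
  have hdiv {d : ℝ} (hd : 0 < d) : (fun x ↦ logFactorial (x / d) -
      (x / d * Real.log (x / d) - x / d)) =o[atTop] fun x : ℝ ↦ x := by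
    refine (logFactorial_sub_isLittleO.comp_tendsto (tendsto_id.atTop_div_const hd)).trans_isBigO ?_
    exact (isBigO_const_mul_self d⁻¹ (fun x : ℝ ↦ x) atTop).congr_left fun x ↦
      (div_eq_inv_mul x d).symm
  refine ((((logFactorial_sub_isLittleO.sub (hdiv two_pos)).sub (hdiv three_pos)).sub
    (hdiv (d := 5) (by norm_num))).add (hdiv (d := 30) (by norm_num))).congr' ?_ .rfl
  filter_upwards [eventually_ne_atTop 0] with x hx
  simp only [chebyshevCombination, chebyshevConstant]
  rw [Real.log_div hx (by norm_num), Real.log_div hx (by norm_num), Real.log_div hx (by norm_num),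
    Real.log_div hx (by norm_num)]
  ring

theorem exists_le_mul_add_of_le_add_div {f : ℝ → ℝ} (hf : Monotone f) {m b : ℝ} (hm : 1 < m)
    (hb : 0 ≤ b) (hrec : ∀ᶠ x in atTop, f x ≤ f (x / m) + b * x) :
    ∃ C, ∀ x, 0 ≤ x → f x ≤ m / (m - 1) * b * x + C := by
  obtain ⟨x₀, hx₀, hrec⟩ := (atTop_basis_Ioi' 0).eventually_iff.1 hrec
  have hm0 : 0 < m := by linarith
  have hm1 : 0 < m - 1 := by linarith
  suffices h : ∀ (n : ℕ) (x : ℝ), 0 ≤ x → x ≤ m ^ n * x₀ → f x ≤ m / (m - 1) * b * x + f x₀ by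
    refine ⟨f x₀, fun x hx ↦ ?_⟩
    obtain ⟨n, hn⟩ := pow_unbounded_of_one_lt (x / x₀) hm
    exact h n x hx ((div_le_iff₀ hx₀).1 hn.le)
  have hsmall (x : ℝ) (hx : 0 ≤ x) (hxx₀ : x ≤ x₀) : f x ≤ m / (m - 1) * b * x + f x₀ :=
    (hf hxx₀).trans (le_add_of_nonneg_left (by positivity))
  intro n
  induction n with
  | zero => exact fun x hx hxn ↦ hsmall x hx (by simpa using hxn)
  | succ n ih =>
    intro x hx hxn
    rcases le_or_gt x x₀ with hxx₀ | hxx₀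
    · exact hsmall x hx hxx₀
    have hxm : x / m ≤ m ^ n * x₀ := (div_le_iff₀ hm0).2 (hxn.trans_eq (by ring))
    calc
      f x ≤ f (x / m) + b * x := hrec hxx₀
      _ ≤ m / (m - 1) * b * (x / m) + f x₀ + b * x := by
        gcongr
        exact ih _ (by positivity) hxm
      _ = m / (m - 1) * b * x + f x₀ := by
        field_simp
        ring

theorem isLittleO_sqrt_atTop : Real.sqrt =o[atTop] fun x : ℝ ↦ x := by
  have hone : (fun _ ↦ 1 : ℝ → ℝ) =o[atTop] Real.sqrt :=
    isLittleO_const_left.2 (.inr (tendsto_norm_atTop_atTop.comp Real.tendsto_sqrt_atTop))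
  refine ((isBigO_refl Real.sqrt atTop).mul_isLittleO hone).congr' (by simp) ?_
  filter_upwards [eventually_ge_atTop 0] with x hx using Real.mul_self_sqrt hx

theorem eventually_mul_le_theta {b : ℝ} (hb : b < chebyshevConstant) :
    ∀ᶠ x in atTop, b * x ≤ θ x := by
  have hδ : 0 < (chebyshevConstant - b) / 2 := by linarith
  have hsqrt : (ψ - θ) =o[atTop] fun x : ℝ ↦ x :=
    isBigO_psi_sub_theta_sqrt.trans_isLittleO isLittleO_sqrt_atTop
  filter_upwards [hsqrt.bound hδ, chebyshevCombination_sub_isLittleO.bound hδ,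
    eventually_ge_atTop 0] with x hpsi hcomb hx
  rw [Real.norm_eq_abs, Real.norm_of_nonneg hx] at hpsi hcomb
  have hpsi' := (le_abs_self _).trans hpsi
  have hcomb' := (neg_le_abs _).trans hcomb
  rw [Pi.sub_apply] at hpsi'
  linarith [chebyshevCombination_le_psi x]

theorem eventually_psi_le_mul {a : ℝ} (ha : 6 / 5 * chebyshevConstant < a) :
    ∀ᶠ x in atTop, ψ x ≤ a * x := by
  have hA := chebyshevConstant_pos
  obtain ⟨b, hAb, hba⟩ := exists_between (show chebyshevConstant < 5 / 6 * a by linarith)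
  have hrec : ∀ᶠ x in atTop, ψ x ≤ ψ (x / 6) + b * x := by
    filter_upwards [chebyshevCombination_sub_isLittleO.bound (sub_pos.2 hAb),
      eventually_ge_atTop 0] with x hcomb hx
    rw [Real.norm_eq_abs, Real.norm_of_nonneg hx] at hcomb
    linarith [(le_abs_self _).trans hcomb, psi_le_psi_div_six_add_chebyshevCombination x]
  obtain ⟨C, hC⟩ := exists_le_mul_add_of_le_add_div psi_mono (by norm_num) (hA.trans hAb).le hrec
  have hδ : 0 < a - 6 / 5 * b := by linarith
  filter_upwards [eventually_ge_atTop 0, eventually_ge_atTop (C / (a - 6 / 5 * b))] with x hx hxC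
  linarith [hC x hx, (div_le_iff₀' hδ).1 hxC]

theorem exists_prime_of_theta_lt {x y : ℝ} (h : θ x < θ y) :
    ∃ p : ℕ, p.Prime ∧ x < p ∧ p ≤ y := by
  by_contra! hcon
  refine h.not_ge (sum_le_sum_of_subset_of_nonneg ?_ fun p _ _ ↦ Real.log_natCast_nonneg p)
  intro p hp
  obtain ⟨hpy, hprime⟩ := mem_filter.1 hp
  have hp0 : p ≠ 0 := hprime.ne_zero
  have hpx : (p : ℝ) ≤ x := by
    by_contra! hxp
    exact ((hcon p hprime hxp).trans_le ((Nat.le_floor_iff' hp0).1 (mem_Ioc.1 hpy).2)).false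
  exact mem_filter.2 ⟨mem_Ioc.2 ⟨hprime.pos, (Nat.le_floor_iff' hp0).2 hpx⟩, hprime⟩

theorem eventually_exists_prime {c : ℝ} (hc : 6 / 5 < c) :
    ∀ᶠ x : ℝ in atTop, ∃ p : ℕ, p.Prime ∧ x < p ∧ p ≤ c * x := by
  have hA := chebyshevConstant_pos
  obtain ⟨a, ha, hac⟩ := exists_between (mul_lt_mul_of_pos_right hc hA)
  obtain ⟨b, hab, hb⟩ := exists_between ((div_lt_iff₀' (by linarith)).2 hac)
  have hcx : Tendsto (fun x ↦ c * x) atTop atTop := tendsto_id.const_mul_atTop (by linarith)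
  filter_upwards [eventually_psi_le_mul ha, hcx.eventually (eventually_mul_le_theta hb),
    eventually_gt_atTop 0] with x hle hge hx
  refine exists_prime_of_theta_lt (((theta_le_psi x).trans hle).trans_lt (lt_of_lt_of_le ?_ hge))
  rw [← mul_assoc]
  exact mul_lt_mul_of_pos_right ((div_lt_iff₀ (by linarith)).1 hab) hx

end PrimeGaps

section Asymptotics

open Asymptotics Filter

theorem eventually_fGraph_cycleGraph_six_le_mul {d : ℝ} (hd : 3 / 2 < d) :
    ∀ᶠ q : ℕ in atTop, q.Prime → ∀ r ≤ q ^ 2, (fGraph (cycleGraph 6) r : ℝ) ≤ d * q := by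
  have hsmall : (fun q : ℕ ↦ 14 * (√q + 1)) =o[atTop] fun q : ℕ ↦ (q : ℝ) :=
    ((isLittleO_sqrt_atTop.add (isLittleO_const_id_atTop 1)).const_mul_left 14).comp_tendsto
      tendsto_natCast_atTop_atTop
  filter_upwards [hsmall.bound (sub_pos.2 hd)] with q hsmall hq r hr
  rw [Real.norm_eq_abs, Real.norm_natCast] at hsmall
  calc
    (fGraph (cycleGraph 6) r : ℝ) ≤ (q / 2 : ℕ) + q + 14 * (q.sqrt + 1) :=
      mod_cast fGraph_cycleGraph_six_le hq hr
    _ ≤ q / 2 + q + 14 * (√q + 1) := by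
      gcongr
      · exact Nat.cast_div_le
      · exact Real.nat_sqrt_le_real_sqrt
    _ ≤ d * q := by linarith [(le_abs_self _).trans hsmall]

theorem stmt2_general (c : ℝ) (hc : 9 / 5 < c) :
    ∃ r₀ : ℕ, ∀ r : ℕ, r₀ ≤ r →
      (fGraph (cycleGraph 6) r : ℝ) ≤ c * (r : ℝ) ^ ((1 : ℝ) / 2) := by
  obtain ⟨c', hc', hcc'⟩ := exists_between (show (6 / 5 : ℝ) < 2 / 3 * c by linarith)
  have hc'0 : 0 < c' := by linarith
  have hd : 3 / 2 < c / c' := by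
    rw [lt_div_iff₀ hc'0]
    linarith
  obtain ⟨q₀, hq₀⟩ := eventually_atTop.1 (eventually_fGraph_cycleGraph_six_le_mul hd)
  have hsqrt : Tendsto (fun r : ℕ ↦ √r) atTop atTop :=
    Real.tendsto_sqrt_atTop.comp tendsto_natCast_atTop_atTop
  refine eventually_atTop.1 ?_
  filter_upwards [hsqrt.eventually (eventually_exists_prime hc'),
    hsqrt.eventually_ge_atTop q₀] with r ⟨q, hq, hrq, hqr⟩ hr
  have hqq₀ : q₀ ≤ q := by exact_mod_cast (hr.trans hrq.le)
  have hrq2 : r ≤ q ^ 2 := by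
    exact_mod_cast (Real.sqrt_le_left (Nat.cast_nonneg q)).1 hrq.le
  rw [← Real.sqrt_eq_rpow]
  calc
    (fGraph (cycleGraph 6) r : ℝ) ≤ c / c' * q := hq₀ q hqq₀ hq r hrq2
    _ ≤ c / c' * (c' * √r) := by gcongr
    _ = c * √r := by field_simp

end Asymptotics

/-- For every `ε > 0`, for all sufficiently large `r`, `f(r, C_6) ≤ (2+ε)·r^{1/2}`. -/
theorem stmt2 (ε : ℝ) (hε : 0 < ε) :
    ∃ r₀ : ℕ, ∀ r : ℕ, r₀ ≤ r →
      (fGraph (SimpleGraph.cycleGraph 6) r : ℝ) ≤ (2 + ε) * (r : ℝ) ^ ((1 : ℝ) / 2) :=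
  stmt2_general (2 + ε) (by linarith)
end
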